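/- For every natural number n ≥ 2, the n-sphere S^n is not homotopy equivalent to any product ∏_{k ∈ ℕ} Y_k of Eilenberg–Mac Lane spaces, i.e., of path-connected pointed spaces Y_k such that for every k and every i ≠ k the homotopy group π_i(Y_k, y) is trivial for every basepoint y in Y_k. (This uses π_3(S²) = ℤ and π_{n+1}(S^n) = ℤ/2ℤ for n ≥ 3.) -/

import Mathlib

/-!
If `S^n` were equivalent to `∏ Y_k`, then, since `π_n(Y_k) = 0` for `k ≠ n`, a generator of
`π_n(S^n)` could be deformed into the single factor `Y_n` (`exists_concentrated`). Let `b : I^n → Y_n`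
represent its component there. The boundary of `I^n × I^n` carries the map sending `(x, y)` to `b x`
if `y ∈ ∂I^n` and to `b y` if `x ∈ ∂I^n`; this is the Whitehead square of `b`. The higher homotopy of
`Y_n` vanishes, so this map extends over `I^n × I^n`, and the extension can be chosen invariant under
`(x, y) ↦ (y, x)`. It is built by induction on the set of pairs agreeing in their first `k`
coordinates: an explicit formula serves for `k = n - 1`, and in each later step the map is extended
over one half of the new pairs and reflected to the other half (`exists_symmetric`, where
`extend_convex` fills the halves).

On the sphere itself such a symmetric extension is impossible (`no_symmetric`). For even `n` any
extension is already excluded by the Hopf invariant, which is `2` on the Whitehead square of the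
identity. For odd `n` the Whitehead square may be trivial, as for `n = 3`, and the symmetry is
essential: it allows one to keep half of the sum computing the Hopf invariant. Modulo `2`, this half
is `1` by a computation on the boundary, whereas the extension forces it to be `0`. In this way the
groups `π_{n+1}(S^n)` need not be computed.

No homology theory is involved. A map of the cube to the sphere is restricted to a fine grid with
its Freudenthal triangulation, whose simplices correspond to a corner and an order of the axes. The
generator of `H^n(S^n; ℤ/2)` becomes an explicit cochain `U`, summing it gives a degree, and the half
invariant is the sum of a cup product of two such cochains, dual to different points, over a
fundamental domain for the exchange (`symm_parity`, `cup_contra`).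
-/

open Topology

namespace SphereEM
open Finset
open scoped unitInterval

/-! ### Cochains on the Freudenthal triangulation of a grid -/

/-- The `i`-th face of a simplex: the vertex sequence `s` with its `i`-th entry dropped. Simplices are
encoded as infinite sequences of which only an initial segment matters. -/
def skip {V : Type*} (i : ℕ) (s : ℕ → V) : ℕ → V := fun k => if k < i then s k else s (k + 1)

/-- The `k`-th vertex of the Freudenthal simplex with lowest corner `v` and axis ranks `r`: a unit is
added to each coordinate of rank less than `k`. -/
def vert {ι : Type*} (v r : ι → ℕ) (k : ℕ) : ι → ℕ := fun j => v j + if r j < k then 1 else 0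

section Grid
variable {ι : Type*} [Fintype ι] [DecidableEq ι] {m : ℕ}

/-- An ordering of the axes as a rank function with values in `ℕ`. -/
def rk {M : ℕ} (r : ι ≃ Fin M) : ι → ℕ := fun j => (r j : ℕ)

/-- The axis along which the last edge of the simplex with axis order `r` runs. -/
def lastDir (r : ι ≃ Fin (m + 1)) : ι := r.symm (Fin.last m)

variable (ι) in
/-- Lowest corners of the unit cubes into which the cube `[0, N]^ι` is cut. -/
def box (N : ℕ) : Finset (ι → ℕ) := Fintype.piFinset fun _ => range N

/-- Lattice points with `j`-th coordinate `ε` and the others less than `N`: the lowest corners of the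
unit cubes of the slice `v j = ε`. -/
def wall (N : ℕ) (j : ι) (ε : ℕ) : Finset (ι → ℕ) :=
  Fintype.piFinset fun i => if i = j then {ε} else range N

/-- Sum of the cochain `c` over the `m`-simplices that lie in the slice on which the axis `lastDir r`
has value `ε` and whose edges follow the order `r` without its last axis. Only the vertices
`0, …, m` count, so the last axis is never moved along. -/
def faceSum (N : ℕ) (c : (ℕ → ι → ℕ) → ZMod 2) (r : ι ≃ Fin (m + 1)) (ε : ℕ) : ZMod 2 :=
  ∑ v ∈ wall N (lastDir r) ε, c (vert v (rk r))

omit [Fintype ι] [DecidableEq ι] in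
/-- Dropping an inner vertex forgets the order of the two axes meeting there, so that the simplices
of two neighbouring orders share this face. -/
lemma skip_swap (v : ι → ℕ) (r : ι ≃ Fin (m + 1)) (i : ℕ) (h1 : 1 ≤ i) (hm : i ≤ m) :
    skip i (vert v (rk (r.trans (Equiv.swap ⟨i - 1, by omega⟩ ⟨i, by omega⟩)))) =
      skip i (vert v (rk r)) := by
  have key : ∀ k, k ≠ i → ∀ j,
      vert v (rk (r.trans (Equiv.swap ⟨i - 1, by omega⟩ ⟨i, by omega⟩))) k j
        = vert v (rk r) k j := by
    intro k hk j
    refine congrArg (v j + ·) (if_congr ?_ rfl rfl)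
    simp only [rk, Equiv.trans_apply, Equiv.swap_apply_def]
    have h3 := (r j).isLt
    by_cases ha : (r j : ℕ) = i - 1
    · have : r j = ⟨i - 1, by omega⟩ := Fin.ext ha
      rw [if_pos this, ha]
      simp only
      omega
    · have ha' : r j ≠ ⟨i - 1, by omega⟩ := fun h => ha (congrArg Fin.val h)
      rw [if_neg ha']
      by_cases hb : (r j : ℕ) = i
      · have : r j = ⟨i, by omega⟩ := Fin.ext hb
        rw [if_pos this, hb]
        simp only
        omega
      · have hb' : r j ≠ ⟨i, by omega⟩ := fun h => hb (congrArg Fin.val h)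
        rw [if_neg hb']
  funext k j
  simp only [skip]
  split_ifs with h
  · exact key _ (by omega) _
  · exact key _ (by omega) _

omit [Fintype ι] in
lemma skip_zero_vert (v : ι → ℕ) (r : ι ≃ Fin (m + 1)) (k : ℕ) (hk : k ≤ m) :
    skip 0 (vert v (rk (r.trans (finRotate (m + 1))))) k =
      vert (Function.update v (lastDir r) (v (lastDir r) + 1)) (rk r) k := by
  funext j
  simp only [skip, vert, rk, Equiv.trans_apply, Nat.not_lt_zero, if_false]
  by_cases hj : j = lastDir r
  · subst hj
    have : r (lastDir r) = Fin.last m := by simp [lastDir]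
    simp [this]; omega
  · have h2 : r j ≠ Fin.last m := fun h => hj (by simp [lastDir, ← h])
    have h3 : ((finRotate (m + 1)) (r j) : ℕ) = r j + 1 := by
      rw [coe_finRotate]; simp [h2]
    rw [Function.update_of_ne hj]
    refine congrArg (v j + ·) (if_congr ?_ rfl rfl)
    rw [h3, Nat.add_lt_add_iff_right]

lemma sum_box (N : ℕ) (j : ι) (f : (ι → ℕ) → ZMod 2) :
    ∑ v ∈ box ι N, f v = ∑ ε ∈ range N, ∑ v ∈ wall N j ε, f v := by
  rw [← Finset.sum_fiberwise_of_maps_to (s := box ι N) (t := range N) (g := fun v => v j)]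
  · refine sum_congr rfl fun ε hε => sum_congr ?_ fun _ _ => rfl
    ext v
    simp only [box, wall, mem_filter, Fintype.mem_piFinset]
    constructor
    · rintro ⟨h, rfl⟩ i
      by_cases hi : i = j
      · simp [hi]
      · simpa [hi] using h i
    · intro h
      have hj := h j
      simp only [if_true, mem_singleton] at hj
      refine ⟨fun i => ?_, hj⟩
      by_cases hi : i = j
      · rw [hi, hj]; exact hε
      · simpa [hi] using h i
  · intro v hv
    simp only [box, Fintype.mem_piFinset] at hv
    exact hv j

lemma sum_wall_succ (N : ℕ) (j : ι) (ε : ℕ) (f : (ι → ℕ) → ZMod 2) :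
    ∑ v ∈ wall N j ε, f (Function.update v j (v j + 1)) = ∑ v ∈ wall N j (ε + 1), f v := by
  refine sum_bij' (fun v _ => Function.update v j (v j + 1))
    (fun v _ => Function.update v j (v j - 1)) ?_ ?_ ?_ ?_ ?_
  · intro v hv
    simp only [wall, Fintype.mem_piFinset] at hv ⊢
    intro i
    by_cases hi : i = j
    · subst hi; simpa using hv i
    · simpa [hi] using hv i
  · intro v hv
    simp only [wall, Fintype.mem_piFinset] at hv ⊢
    intro i
    by_cases hi : i = j
    · subst hi
      have := hv i
      simp only [if_true, mem_singleton] at this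
      simp [this]
    · simpa [hi] using hv i
  · intro v _; simp
  · intro v hv
    simp only [wall, Fintype.mem_piFinset] at hv
    have := hv j
    simp only [if_true, mem_singleton] at this
    have h2 : v j - 1 + 1 = v j := by omega
    simp [h2]
  · intro v _; rfl

/-- Sum of the cocycle condition over all top simplices of the grid, an order `r` having weight `χ r`.
If the inner faces cancel (`hI`), only first and last faces remain; the first face of the simplex
with rotated order is the last face of a simplex in the next unit cube, which gives the first sum. -/
lemma weighted_parity (N : ℕ) (c : (ℕ → ι → ℕ) → ZMod 2)
    (hdep : ∀ s s' : ℕ → ι → ℕ, (∀ k ≤ m, s k = s' k) → c s = c s')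
    (hc : ∀ v ∈ box ι N, ∀ r : ι ≃ Fin (m + 1),
      ∑ i ∈ range (m + 2), c (skip i (vert v (rk r))) = 0)
    (χ : (ι ≃ Fin (m + 1)) → ZMod 2)
    (hI : ∀ i, 1 ≤ i → i ≤ m →
      ∑ r : ι ≃ Fin (m + 1), ∑ v ∈ box ι N, χ r * c (skip i (vert v (rk r))) = 0) :
    ∑ r : ι ≃ Fin (m + 1), χ (r.trans (finRotate (m + 1))) *
        ∑ ε ∈ range N, faceSum N c r (ε + 1) +
      ∑ r : ι ≃ Fin (m + 1), χ r * ∑ ε ∈ range N, faceSum N c r ε = 0 := by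
  have h0 : ∑ r : ι ≃ Fin (m + 1), ∑ v ∈ box ι N,
      ∑ i ∈ range (m + 2), χ r * c (skip i (vert v (rk r))) = 0 := by
    refine sum_eq_zero fun r _ => sum_eq_zero fun v hv => ?_
    rw [← mul_sum, hc v hv r, mul_zero]
  have h1 : ∑ i ∈ range (m + 2), ∑ r : ι ≃ Fin (m + 1), ∑ v ∈ box ι N,
      χ r * c (skip i (vert v (rk r))) = 0 := by
    rw [← h0, sum_comm]
    refine sum_congr rfl fun r _ => ?_
    rw [sum_comm]
  rw [sum_range_succ, sum_range_succ', sum_eq_zero, zero_add] at h1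
  · rw [← h1]
    congr 1
    · rw [← Equiv.sum_comp (Equiv.equivCongr (Equiv.refl ι) (finRotate (m + 1)))
        (fun r => ∑ v ∈ box ι N, χ r * c (skip 0 (vert v (rk r))))]
      refine sum_congr rfl fun r _ => ?_
      have : (Equiv.equivCongr (Equiv.refl ι) (finRotate (m + 1))) r
          = r.trans (finRotate (m + 1)) := by ext; simp [Equiv.equivCongr]
      rw [this, ← mul_sum]
      congr 1
      rw [sum_box N (lastDir r)]
      refine sum_congr rfl fun ε _ => ?_
      rw [faceSum, ← sum_wall_succ]
      refine sum_congr rfl fun v _ => (hdep _ _ fun k hk => ?_).symm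
      exact skip_zero_vert v r k hk
    · refine sum_congr rfl fun r _ => ?_
      rw [← mul_sum]
      congr 1
      rw [sum_box N (lastDir r)]
      refine sum_congr rfl fun ε _ => ?_
      rw [faceSum]
      refine sum_congr rfl fun v _ => hdep _ _ fun k hk => ?_
      simp only [skip]
      rw [if_pos (by omega)]
  · intro i hi
    exact hI (i + 1) (by omega) (by have := mem_range.1 hi; omega)

lemma sum_telescope (N : ℕ) (f : ℕ → ZMod 2) :
    ∑ ε ∈ range N, f (ε + 1) + ∑ ε ∈ range N, f ε = f 0 + f N := by
  have h := sum_range_succ f N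
  rw [sum_range_succ'] at h
  have h2 : ∀ a : ZMod 2, a + a = 0 := CharTwo.add_self_eq_zero
  linear_combination h + h2 (∑ ε ∈ range N, f ε) - h2 (f 0)

/-- A mod 2 cocycle sums to zero over the boundary of the grid cube. -/
lemma parity (N : ℕ) (c : (ℕ → ι → ℕ) → ZMod 2)
    (hdep : ∀ s s' : ℕ → ι → ℕ, (∀ k ≤ m, s k = s' k) → c s = c s')
    (hc : ∀ v ∈ box ι N, ∀ r : ι ≃ Fin (m + 1),
      ∑ i ∈ range (m + 2), c (skip i (vert v (rk r))) = 0) :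
    ∑ r : ι ≃ Fin (m + 1), (faceSum N c r 0 + faceSum N c r N) = 0 := by
  have h := weighted_parity N c hdep hc (fun _ => 1) ?_
  · simp only [one_mul] at h
    rw [← h, ← sum_add_distrib]
    exact sum_congr rfl fun r _ => (sum_telescope N (faceSum N c r)).symm
  · intro i h1 h2
    simp only [one_mul]
    rw [sum_comm]
    refine sum_eq_zero fun v _ => ?_
    refine sum_involution
      (fun r _ => r.trans (Equiv.swap ⟨i - 1, by omega⟩ ⟨i, by omega⟩)) ?_ ?_ ?_ ?_
    · intro r _
      rw [skip_swap v r i h1 h2]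
      exact CharTwo.add_self_eq_zero _
    · intro r _ _ h
      have := congrArg (fun q => ((q (r.symm ⟨i, by omega⟩) : Fin (m + 1)) : ℕ)) h
      simp at this
      omega
    · intros; exact mem_univ _
    · intro r _; ext j; simp

/-- Indicator of the orders in which `x₀` precedes `y₀`. For an involution of the axes exchanging
`x₀` and `y₀` these orders form a fundamental domain. -/
def ordInd (x₀ y₀ : ι) (r : ι ≃ Fin (m + 1)) : ZMod 2 := if r x₀ < r y₀ then 1 else 0

/-- A version of `parity` for a cochain invariant under an involution `τ` of the axes, with only half of
the boundary: `S` selects one wall direction from each pair of directions exchanged by `τ`, and the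
selected walls alone already sum to zero, if each wall in a direction belonging to no pair does (`hz`).
The cocycle condition is summed over the fundamental domain `ordInd x₀ y₀`. Its inner faces cancel
in pairs under exchange of adjacent axes, composed with `τ` if the adjacent axes are `x₀` and `y₀`;
the second exchanged pair, that of `x₁`, keeps this involution free of fixed points. -/
lemma symm_parity (N : ℕ) (c : (ℕ → ι → ℕ) → ZMod 2)
    (hdep : ∀ s s' : ℕ → ι → ℕ, (∀ k ≤ m, s k = s' k) → c s = c s')
    (hc : ∀ v ∈ box ι N, ∀ r : ι ≃ Fin (m + 1),
      ∑ i ∈ range (m + 2), c (skip i (vert v (rk r))) = 0)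
    (τ : Equiv.Perm ι) (hτ : ∀ j, τ (τ j) = j)
    (hcτ : ∀ s : ℕ → ι → ℕ, c (fun k => s k ∘ τ) = c s)
    (x₀ y₀ x₁ : ι) (hxy : x₀ ≠ y₀) (hτx : τ x₀ = y₀) (hx1 : τ x₁ ≠ x₁) (h10 : x₁ ≠ x₀)
    (h1y : x₁ ≠ y₀)
    (S : ι → Prop) [DecidablePred S] (hS : ∀ j, S j → ¬ S (τ j))
    (hz : ∀ r : ι ≃ Fin (m + 1), ¬ S (lastDir r) → ¬ S (τ (lastDir r)) →
      faceSum N c r 0 + faceSum N c r N = 0) :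
    ∑ r : ι ≃ Fin (m + 1) with S (lastDir r), (faceSum N c r 0 + faceSum N c r N) = 0 := by
  have hτy : τ y₀ = x₀ := by rw [← hτx, hτ]
  have two : ∀ a : ZMod 2, a + a = 0 := CharTwo.add_self_eq_zero
  have hττ : τ.symm = τ := by ext j; rw [Equiv.symm_apply_eq, hτ]
  have hlast : ∀ r : ι ≃ Fin (m + 1), lastDir (τ.trans r) = τ (lastDir r) := by
    intro r; simp [lastDir, hττ]
  have hface : ∀ (r : ι ≃ Fin (m + 1)) ε, faceSum N c (τ.trans r) ε = faceSum N c r ε := by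
    intro r ε
    unfold faceSum
    refine sum_bij' (fun v _ => v ∘ τ) (fun v _ => v ∘ τ) ?_ ?_ ?_ ?_ ?_
    · intro v hv
      simp only [wall, Fintype.mem_piFinset, hlast] at hv ⊢
      intro i
      have := hv (τ i)
      simp only [τ.injective.eq_iff] at this
      simpa using this
    · intro v hv
      simp only [wall, Fintype.mem_piFinset, hlast] at hv ⊢
      intro i
      have h := hv (τ i)
      by_cases hi : i = τ (lastDir r)
      · subst hi
        simpa [hτ] using h
      · have h3 : τ i ≠ lastDir r := fun h => hi (by rw [← h, hτ])
        simpa [h3, hi] using h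
    · intro v _; funext j; simp [hτ]
    · intro v _; funext j; simp [hτ]
    · intro v _
      rw [← hcτ]
      congr 1
      funext k j
      simp only [vert, Function.comp]
      refine congrArg₂ (· + ·) rfl (if_congr ?_ rfl rfl)
      simp [rk, hτ]
  set χ : (ι ≃ Fin (m + 1)) → ZMod 2 := ordInd x₀ y₀ with hχ
  have h := weighted_parity N c hdep hc χ ?_
  -- Rotation of the order changes the weight only if the last axis is `x₀` or `y₀`, and these
  -- contributions cancel in pairs under `τ`.
  · have hrot : ∀ r : ι ≃ Fin (m + 1), χ (r.trans (finRotate (m + 1))) =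
        χ r + (if lastDir r = x₀ ∨ lastDir r = y₀ then 1 else 0) := by
      intro r
      simp only [hχ, ordInd, Equiv.trans_apply, Fin.lt_def, coe_finRotate]
      have e1 : lastDir r = x₀ ↔ r x₀ = Fin.last m := by
        rw [lastDir, Equiv.symm_apply_eq, eq_comm]
      have e2 : lastDir r = y₀ ↔ r y₀ = Fin.last m := by
        rw [lastDir, Equiv.symm_apply_eq, eq_comm]
      have hne : r x₀ ≠ r y₀ := fun h => hxy (r.injective h)
      simp only [e1, e2]
      by_cases ha : r x₀ = Fin.last m
      · have hb : r y₀ ≠ Fin.last m := fun h => hne (ha.trans h.symm)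
        have := (r y₀).isLt
        have hb' : ¬ (m < (r y₀ : ℕ)) := by omega
        simp [ha, hb, hb']
      · by_cases hb : r y₀ = Fin.last m
        · have h4 : (r x₀ : ℕ) < m := by
            have := (r x₀).isLt
            have : (r x₀ : ℕ) ≠ m := fun h => ha (Fin.ext h)
            omega
          simp [ha, hb, h4, two]
        · simp [ha, hb]
    have hextra : ∑ r : ι ≃ Fin (m + 1), (if lastDir r = x₀ ∨ lastDir r = y₀ then 1 else 0) *
        ∑ ε ∈ range N, faceSum N c r (ε + 1) = 0 := by
      refine sum_involution (fun r _ => τ.trans r) ?_ ?_ ?_ ?_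
      · intro r _
        have : (lastDir (τ.trans r) = x₀ ∨ lastDir (τ.trans r) = y₀) ↔
            (lastDir r = x₀ ∨ lastDir r = y₀) := by
          have e3 : τ (lastDir r) = y₀ ↔ lastDir r = x₀ := by rw [← hτx, τ.injective.eq_iff]
          rw [hlast, e3, or_comm]
          refine or_congr Iff.rfl ?_
          constructor
          · intro h; rw [← hτ (lastDir r), h, hτx]
          · intro h; rw [h, hτy]
        simp only [this, hface]
        exact two _
      · intro r _ _ h
        have := congrArg (fun q : ι ≃ Fin (m + 1) => q x₀) h
        simp [hτx] at this
        exact hxy this.symm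
      · intros; exact mem_univ _
      · intro r _; ext j; simp [hτ]
    simp only [hrot, add_mul, sum_add_distrib] at h
    rw [hextra, add_zero, ← sum_add_distrib] at h
    simp only [← mul_add, ← sum_add_distrib] at h
    simp only [sum_add_distrib, sum_telescope] at h
    -- Exactly one of `r` and its image under `τ` has weight one, so that each exchanged pair of
    -- walls contributes the face sum of one of them.
    have hχτ : ∀ r : ι ≃ Fin (m + 1), χ (τ.trans r) = χ r + 1 := by
      intro r
      have hne : r x₀ ≠ r y₀ := fun h => hxy (r.injective h)
      simp only [hχ, ordInd, Equiv.trans_apply, hτx, hτy]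
      rcases lt_or_gt_of_ne hne with h | h
      · simp [h, two, not_lt.2 h.le]
      · simp [h, not_lt.2 h.le]
    rw [← sum_filter_add_sum_filter_not univ (fun r => S (lastDir r))] at h
    rw [← sum_filter_add_sum_filter_not ({r | ¬ S (lastDir r)} : Finset (ι ≃ Fin (m + 1)))
      (fun r => S (τ (lastDir r)))] at h
    rw [sum_eq_zero (s := filter (fun r => ¬ S (τ (lastDir r))) _), add_zero] at h
    · rw [← h, ← sub_eq_iff_eq_add', ← sum_sub_distrib]
      refine sum_bij' (fun r _ => τ.trans r) (fun r _ => τ.trans r) ?_ ?_ ?_ ?_ ?_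
      · intro r hr
        simp only [mem_filter, mem_univ, true_and, hlast, hτ] at hr ⊢
        exact ⟨hS _ hr, hr⟩
      · intro r hr
        simp only [mem_filter, mem_univ, true_and, hlast] at hr ⊢
        exact hr.2
      · intro r _; ext j; simp [hτ]
      · intro r _; ext j; simp [hτ]
      · intro r _
        simp only [hface, hχτ]
        linear_combination -(two (χ r * (faceSum N c r 0 + faceSum N c r N)))
    · intro r hr
      simp only [mem_filter, mem_univ, true_and] at hr
      rw [hz r hr.1 hr.2, mul_zero]
  · intro i h1 h2
    rw [← sum_product']
    let sw : Equiv.Perm (Fin (m + 1)) := Equiv.swap ⟨i - 1, by omega⟩ ⟨i, by omega⟩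
    have hsw : ∀ a, sw (sw a) = a := fun a => Equiv.swap_apply_self _ _ a
    have hswv : ∀ a : Fin (m + 1), (sw a : ℕ) =
        if (a : ℕ) = i - 1 then i else if (a : ℕ) = i then i - 1 else a := by
      intro a
      simp only [sw, Equiv.swap_apply_def, Fin.ext_iff]
      split_ifs <;> rfl
    let A : (ι ≃ Fin (m + 1)) → Prop := fun r =>
      ((r x₀ : ℕ) = i - 1 ∧ (r y₀ : ℕ) = i) ∨ ((r x₀ : ℕ) = i ∧ (r y₀ : ℕ) = i - 1)
    have hA1 : ∀ r, A r → sw (r y₀) = r x₀ ∧ sw (r x₀) = r y₀ := by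
      intro r hr
      simp only [Fin.ext_iff, hswv]
      rcases hr with ⟨ha, hb⟩ | ⟨ha, hb⟩
      · rw [ha, hb]; constructor <;> split_ifs <;> omega
      · rw [ha, hb]; constructor <;> split_ifs <;> omega
    classical
    let Φ : (ι ≃ Fin (m + 1)) × (ι → ℕ) → (ι ≃ Fin (m + 1)) × (ι → ℕ) := fun p =>
      if A p.1 then (τ.trans (p.1.trans sw), p.2 ∘ τ) else (p.1.trans sw, p.2)
    refine sum_involution (fun p _ => Φ p) ?_ ?_ ?_ ?_
    · rintro ⟨r, v⟩ _
      by_cases hA : A r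
      · simp only [Φ, hA, if_true]
        have e1 : χ (τ.trans (r.trans sw)) = χ r := by
          simp only [hχ, ordInd, Equiv.trans_apply, hτx, hτy, (hA1 r hA).1, (hA1 r hA).2]
        have e2 : c (skip i (vert (v ∘ τ) (rk (τ.trans (r.trans sw))))) =
            c (skip i (vert v (rk r))) := by
          rw [← skip_swap v r i h1 h2, ← hcτ (skip i (vert v (rk (r.trans sw))))]
          congr 1
          funext k j
          simp only [skip, Function.comp]
          split_ifs
          all_goals
            simp only [vert, Function.comp]
            refine congrArg₂ (· + ·) (by simp) (if_congr ?_ rfl rfl)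
            simp [rk]
        rw [e1, e2]; exact two _
      · simp only [Φ, hA, if_false]
        have e1 : χ (r.trans sw) = χ r := by
          have hne : (r x₀ : ℕ) ≠ r y₀ := fun h => hxy (r.injective (Fin.ext h))
          simp only [hχ, ordInd, Equiv.trans_apply, Fin.lt_def, hswv]
          simp only [A, not_or, not_and] at hA
          congr 1
          apply propext
          obtain ⟨hA, hB⟩ := hA
          split_ifs <;> omega
        rw [e1, skip_swap v r i h1 h2]; exact two _
    · rintro ⟨r, v⟩ _ _ h
      by_cases hA : A r
      · simp only [Φ, hA, if_true, Prod.mk.injEq] at h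
        have h5 := congrArg (fun q : ι ≃ Fin (m + 1) => (q x₁ : ℕ)) h.1
        simp only [Equiv.trans_apply, hswv] at h5
        have h6 : (r (τ x₁) : ℕ) ≠ r x₀ := fun h => h1y (by
          rw [← hτ x₁, r.injective (Fin.ext h), hτx])
        have h7 : (r (τ x₁) : ℕ) ≠ r y₀ := fun h => h10 (by
          rw [← hτ x₁, r.injective (Fin.ext h), hτy])
        have h8 : (r (τ x₁) : ℕ) ≠ r x₁ := fun h => hx1 (r.injective (Fin.ext h))
        simp only [A] at hA
        split_ifs at h5 <;> omega
      · simp only [Φ, hA, if_false, Prod.mk.injEq] at h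
        have h5 := congrArg (fun q : ι ≃ Fin (m + 1) => (q (r.symm ⟨i, by omega⟩) : ℕ)) h.1
        simp only [Equiv.trans_apply, hswv, Equiv.apply_symm_apply] at h5
        split_ifs at h5 <;> omega
    · rintro ⟨r, v⟩ hv
      simp only [mem_product, mem_univ, true_and, box, Fintype.mem_piFinset] at hv ⊢
      intro j
      by_cases hA : A r
      · simpa [Φ, hA] using hv (τ j)
      · simpa [Φ, hA] using hv j
    · rintro ⟨r, v⟩ _
      by_cases hA : A r
      · have hA' : A (τ.trans (r.trans sw)) := by
          simp only [A, Equiv.trans_apply, hτx, hτy, (hA1 r hA).1, (hA1 r hA).2]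
          exact hA
        simp only [Φ, hA, if_true, hA']
        refine Prod.ext (Equiv.ext fun j => ?_) (funext fun j => ?_) <;> simp [hτ, hsw]
      · have hA' : ¬ A (r.trans sw) := by
          simp only [A, Equiv.trans_apply, hswv] at hA ⊢
          split_ifs <;> omega
        simp only [Φ, hA, if_false, hA']
        refine Prod.ext (Equiv.ext fun j => ?_) (funext fun j => ?_) <;> simp [hsw]

end Grid

/-! ### Degree and cup product modulo 2 -/

section Cochain
variable {V : Type*}

/-- The cup product `g₀ ∪ δg₁ ∪ … ∪ δgₙ` of the `0`-cochain `g 0` with the coboundaries of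
`g 1, …, g n`, a mod 2 cochain of degree `n`. It counts the simplices crossing all the hypersurfaces
where `g 1, …, g n` jump, inside the region where `g 0 = 1`. -/
def U (g : ℕ → V → ZMod 2) (n : ℕ) (s : ℕ → V) : ZMod 2 :=
  g 0 (s 0) * ∏ i ∈ range n, (g (i + 1) (s (i + 1)) + g (i + 1) (s i))

lemma U_congr (g : ℕ → V → ZMod 2) {n : ℕ} {s s' : ℕ → V} (h : ∀ k ≤ n, s k = s' k) :
    U g n s = U g n s' := by
  unfold U
  rw [h 0 (Nat.zero_le _)]
  congr 1
  refine prod_congr rfl fun i hi => ?_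
  have := mem_range.1 hi
  rw [h i (by omega), h (i + 1) (by omega)]

lemma U_eq_zero (g : ℕ → V → ZMod 2) {n : ℕ} {s : ℕ → V} {i : ℕ} (hi : i < n)
    (h : s (i + 1) = s i) : U g n s = 0 := by
  unfold U
  rw [prod_eq_zero (mem_range.2 hi), mul_zero]
  rw [h]; exact CharTwo.add_self_eq_zero _

/-- The coboundary of `U g n` is `δg₀ ∪ δg₁ ∪ … ∪ δgₙ`. -/
lemma U_cobdry (g : ℕ → V → ZMod 2) (n : ℕ) (s : ℕ → V) :
    ∑ j ∈ range (n + 2), U g n (skip j s) =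
      ∏ i ∈ range (n + 1), (g i (s (i + 1)) + g i (s i)) := by
  induction n with
  | zero => simp [sum_range_succ, U, skip]
  | succ n ih =>
    have hU : ∀ s' : ℕ → V, U g (n + 1) s' =
        U g n s' * (g (n + 1) (s' (n + 1)) + g (n + 1) (s' n)) := by
      intro s'; simp only [U, prod_range_succ, mul_assoc]
    have two : ∀ a : ZMod 2, a + a = 0 := CharTwo.add_self_eq_zero
    rw [prod_range_succ, ← ih, sum_range_succ, sum_range_succ, sum_range_succ _ (n + 1), add_mul,
      sum_mul]
    have h1 : ∑ j ∈ range (n + 1), U g (n + 1) (skip j s) = ∑ j ∈ range (n + 1),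
        U g n (skip j s) * (g (n + 1) (s (n + 1 + 1)) + g (n + 1) (s (n + 1))) := by
      refine sum_congr rfl fun j hj => ?_
      have := mem_range.1 hj
      rw [hU]
      simp only [skip]
      rw [if_neg (by omega), if_neg (by omega)]
    rw [h1, hU, hU]
    have h2 : U g n (skip (n + 2) s) = U g n (skip (n + 1) s) := by
      refine U_congr g fun k hk => ?_
      simp only [skip]
      rw [if_pos (by omega), if_pos (by omega)]
    rw [h2]
    simp only [skip]
    rw [if_neg (by omega), if_pos (by omega), if_pos (by omega), if_pos (by omega)]
    linear_combination (two (U g n (skip (n + 1) s) * g (n + 1) (s n)))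

/-- The cup product of two mod 2 `n`-cocycles (front face times back face, with the two factors
pulled back along `p` and `q`) is a cocycle. -/
lemma cup_cobdry {V W : Type*} (n : ℕ) (A : (ℕ → V) → ZMod 2) (B : (ℕ → W) → ZMod 2)
    (p : ι → V) (q : ι → W)
    (hA : ∀ s s' : ℕ → V, (∀ k ≤ n, s k = s' k) → A s = A s') (s : ℕ → ι)
    (hδA : ∑ j ∈ range (n + 2), A (p ∘ skip j s) = 0)
    (hδB : ∑ j ∈ range (n + 2), B (q ∘ skip j (fun k => s (k + n))) = 0) :
    ∑ j ∈ range (2 * n + 2), A (p ∘ skip j s) * B (fun k => q (skip j s (k + n))) = 0 := by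
  have two : ∀ a : ZMod 2, a + a = 0 := CharTwo.add_self_eq_zero
  have h : 2 * n + 2 = (n + 1) + (n + 1) := by ring
  rw [h, sum_range_add]
  have h1 : ∑ j ∈ range (n + 1), A (p ∘ skip j s) * B (fun k => q (skip j s (k + n))) =
      ∑ j ∈ range (n + 1), A (p ∘ skip j s) * B (fun k => q (s (k + n + 1))) := by
    refine sum_congr rfl fun j hj => ?_
    have := mem_range.1 hj
    congr 2
    funext k
    simp only [skip]
    rw [if_neg (by omega)]
  have h2 : ∑ j ∈ range (n + 1), A (p ∘ skip (n + 1 + j) s) *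
        B (fun k => q (skip (n + 1 + j) s (k + n))) =
      ∑ j ∈ range (n + 1), A (p ∘ s) * B (q ∘ skip (j + 1) (fun k => s (k + n))) := by
    refine sum_congr rfl fun j hj => ?_
    congr 1
    · refine hA _ _ fun k hk => ?_
      simp only [skip, Function.comp]
      rw [if_pos (by omega)]
    · congr 1
      funext k
      simp only [skip, Function.comp]
      by_cases hk : k < j + 1
      · rw [if_pos (by omega), if_pos hk]
      · rw [if_neg (by omega), if_neg hk]; congr 2; omega
  rw [h1, h2, ← sum_mul, ← mul_sum]
  rw [sum_range_succ] at hδA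
  rw [sum_range_succ'] at hδB
  have h3 : A (p ∘ skip (n + 1) s) = A (p ∘ s) := by
    refine hA _ _ fun k hk => ?_
    simp only [skip, Function.comp]
    rw [if_pos (by omega)]
  have h4 : (q ∘ skip 0 (fun k => s (k + n))) = (fun k => q (s (k + n + 1))) := by
    funext k
    simp only [skip, Function.comp]
    rw [if_neg (by omega)]
    congr 2; omega
  rw [h3] at hδA
  rw [h4] at hδB
  linear_combination B (fun k => q (s (k + n + 1))) * hδA + A (p ∘ s) * hδB -
    two (A (p ∘ s) * B (fun k => q (s (k + n + 1))))

end Cochain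

/-- Any two points of the sequence differ by at most one in every coordinate. -/
def Close {ι : Type*} (s : ℕ → ι → ℕ) : Prop := ∀ k l i, s k i ≤ s l i + 1

lemma close_vert {ι : Type*} (v r : ι → ℕ) : Close (vert v r) := by
  intro k l i; simp only [vert]; split_ifs <;> omega

/-- Along each close sequence, one of `g 0, …, g n` is constant on the image under `f`. This makes the
pullback of `U g n` a cocycle, by `Fine.cobdry`. -/
def Fine {ι T : Type*} (g : ℕ → T → ZMod 2) (n : ℕ) (f : (ι → ℕ) → T) : Prop :=
  ∀ s : ℕ → ι → ℕ, Close s → ∃ i ≤ n, ∀ k l, g i (f (s k)) = g i (f (s l))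

lemma Fine.cobdry {ι T : Type*} {g : ℕ → T → ZMod 2} {n : ℕ} {f : (ι → ℕ) → T}
    (h : Fine g n f) {s : ℕ → ι → ℕ} (hs : Close s) :
    ∑ j ∈ range (n + 2), U g n (f ∘ skip j s) = 0 := by
  have e : ∀ j, f ∘ skip j s = skip j (f ∘ s) := by
    intro j; funext k; simp only [skip, Function.comp]; split_ifs <;> rfl
  simp only [e, U_cobdry]
  obtain ⟨i, hi, h⟩ := h s hs
  refine prod_eq_zero (mem_range.2 (Nat.lt_succ_of_le hi)) ?_
  simp only [Function.comp]
  rw [h (i + 1) i]; exact CharTwo.add_self_eq_zero _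

/-- Mod 2 degree of the grid map `f`: the sum of `U g n` over all `n`-simplices of the grid cube. -/
def deg {T : Type*} (g : ℕ → T → ZMod 2) (n N : ℕ) (f : (Fin n → ℕ) → T) : ZMod 2 :=
  ∑ r : Fin n ≃ Fin n, ∑ v ∈ box (Fin n) N, U g n (fun k => f (vert v (rk r) k))

/-- The order of `X ⊕ W` that runs through `X` first and then through `W`. -/
def comb {X W : Type*} {a b : ℕ} (p : (X ≃ Fin a) × (W ≃ Fin b)) : X ⊕ W ≃ Fin (a + b) :=
  (Equiv.sumCongr p.1 p.2).trans finSumFinEquiv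

lemma comb_injective {X W : Type*} {a b : ℕ} :
    Function.Injective (comb : (X ≃ Fin a) × (W ≃ Fin b) → (X ⊕ W ≃ Fin (a + b))) := by
  rintro ⟨p, q⟩ ⟨p', q'⟩ h
  have h2 : Equiv.sumCongr p q = Equiv.sumCongr p' q' := by
    ext1 j
    have := congrArg (fun r => finSumFinEquiv.symm (r j)) h
    simpa [comb] using this
  have h3 : p = p' := by
    ext1 x; have := congrArg (fun r => r (Sum.inl x)) h2; simpa using this
  have h4 : q = q' := by
    ext1 x; have := congrArg (fun r => r (Sum.inr x)) h2; simpa using this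
  rw [h3, h4]

lemma exists_comb {X W : Type*} [Fintype X] [Fintype W] {a b : ℕ} (hX : Fintype.card X = a)
    (hW : Fintype.card W = b) (r : X ⊕ W ≃ Fin (a + b)) (h : ∀ x, (r (Sum.inl x) : ℕ) < a) :
    ∃ p, comb p = r := by
  let e := r.trans finSumFinEquiv.symm
  have he : ∀ x, ∃ i, e (Sum.inl x) = Sum.inl i := by
    intro x
    refine ⟨⟨r (Sum.inl x), h x⟩, ?_⟩
    simp only [e, Equiv.trans_apply, Equiv.symm_apply_eq, finSumFinEquiv_apply_left]
    ext; simp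
  choose f hf using he
  have hinj : Function.Injective f := by
    intro x y hxy
    have : e (Sum.inl x) = e (Sum.inl y) := by rw [hf, hf, hxy]
    simpa using this
  have hbij : Function.Bijective f := by
    rw [Fintype.bijective_iff_injective_and_card]; exact ⟨hinj, by simp [hX]⟩
  have he2 : ∀ w, ∃ i, e (Sum.inr w) = Sum.inr i := by
    intro w
    rcases hw : e (Sum.inr w) with i | i
    · obtain ⟨x, rfl⟩ := hbij.2 i
      rw [← hf] at hw
      simp at hw
    · exact ⟨i, rfl⟩
  choose f' hf' using he2
  have hinj' : Function.Injective f' := by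
    intro x y hxy
    have : e (Sum.inr x) = e (Sum.inr y) := by rw [hf', hf', hxy]
    simpa using this
  have hbij' : Function.Bijective f' := by
    rw [Fintype.bijective_iff_injective_and_card]; exact ⟨hinj', by simp [hW]⟩
  refine ⟨(Equiv.ofBijective f hbij, Equiv.ofBijective f' hbij'), ?_⟩
  ext1 j
  have : r j = finSumFinEquiv (e j) := by simp [e]
  rw [this]
  rcases j with x | w
  · simp [comb, hf]
  · simp [comb, hf']

lemma exists_not_inl {X W : Type*} [Fintype X] {a b : ℕ} (hX : Fintype.card X = a)
    (r : X ⊕ W ≃ Fin (a + b)) (h : ¬ ∀ x, (r (Sum.inl x) : ℕ) < a) :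
    ∃ i : Fin (a + b), (i : ℕ) < a ∧ ∀ x, r (Sum.inl x) ≠ i := by
  by_contra hcon
  push Not at hcon h
  obtain ⟨x0, hx0⟩ := h
  have : Nonempty X := ⟨x0⟩
  choose! f hf using hcon
  have hinj : Function.Injective (fun i : Fin a => f (Fin.castAdd b i)) := by
    intro i j hij
    have h1 := hf (Fin.castAdd b i) (by simp)
    have h2 := hf (Fin.castAdd b j) (by simp)
    simp only at hij
    rw [hij, h2] at h1
    simpa [Fin.ext_iff] using h1.symm
  have hbij := (Fintype.bijective_iff_injective_and_card _).2 ⟨hinj, by simp [hX]⟩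
  obtain ⟨i, hi⟩ := hbij.2 x0
  have h1 := hf (Fin.castAdd b i) (by simp)
  simp only at hi
  rw [hi] at h1
  have := i.isLt
  rw [h1] at hx0
  simp at hx0
  omega

/-- If the terms of all orders that do not put `X` first vanish, a sum over orders of `X ⊕ W` becomes
a double sum over orders of `X` and orders of `W`. -/
lemma sum_comb {X W : Type*} [Fintype X] [Fintype W] [DecidableEq X] [DecidableEq W] {a b : ℕ}
    (hX : Fintype.card X = a) (hW : Fintype.card W = b) (f : (X ⊕ W ≃ Fin (a + b)) → ZMod 2)
    (Q : (X ⊕ W ≃ Fin (a + b)) → Prop) [DecidablePred Q]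
    (hf : ∀ r, Q r → (¬ ∀ x, (r (Sum.inl x) : ℕ) < a) → f r = 0) :
    ∑ r with Q r, f r = ∑ p : (X ≃ Fin a) × (W ≃ Fin b) with Q (comb p), f (comb p) := by
  symm
  refine sum_of_injOn comb (comb_injective.injOn) ?_ ?_ ?_
  · intro p hp; simpa using hp
  · intro r hr hr2
    simp only [mem_filter, mem_univ, true_and] at hr
    refine hf r hr fun h => hr2 ?_
    obtain ⟨p, rfl⟩ := exists_comb hX hW r h
    exact ⟨p, by simpa using hr, rfl⟩
  · intros; rfl

/-! ### Homotopy invariance of the degree and the half Hopf invariant -/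

section Split
variable {X W : Type*} [Fintype X] [Fintype W] [DecidableEq X] [DecidableEq W] {a b : ℕ}

lemma sum_wall_inr (N : ℕ) (j : W) (ε : ℕ) (F : (X ⊕ W → ℕ) → ZMod 2) :
    ∑ v ∈ wall N (Sum.inr j) ε, F v =
      ∑ x ∈ box X N, ∑ w ∈ wall N j ε, F (Sum.elim x w) := by
  rw [← sum_product']
  refine sum_bij' (fun v _ => (v ∘ Sum.inl, v ∘ Sum.inr)) (fun p _ => Sum.elim p.1 p.2)
    ?_ ?_ ?_ ?_ ?_
  · intro v hv
    simp only [wall, box, mem_product, Fintype.mem_piFinset] at hv ⊢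
    exact ⟨fun i => by simpa using hv (Sum.inl i), fun i => by simpa using hv (Sum.inr i)⟩
  · rintro ⟨x, w⟩ h
    simp only [wall, box, mem_product, Fintype.mem_piFinset] at h ⊢
    rintro (i | i)
    · simpa using h.1 i
    · simpa using h.2 i
  · intro v _; exact Sum.elim_comp_inl_inr v
  · rintro ⟨x, w⟩ _; rfl
  · intro v _; simp only [Sum.elim_comp_inl_inr]

omit [Fintype X] [Fintype W] [DecidableEq X] [DecidableEq W] in
lemma lastDir_comb (p : (X ≃ Fin a) × (W ≃ Fin (b + 1))) :
    lastDir (m := a + b) (comb (b := b + 1) p) = Sum.inr (lastDir p.2) := by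
  unfold lastDir
  rw [Equiv.symm_apply_eq]
  ext
  simp [comb]

omit [Fintype X] [Fintype W] [DecidableEq X] [DecidableEq W] in
lemma vert_comb (p : (X ≃ Fin a) × (W ≃ Fin b)) (x : X → ℕ) (w : W → ℕ) (k : ℕ) (hk : k ≤ a) :
    vert (Sum.elim x w) (rk (comb p)) k = Sum.elim (vert x (rk p.1) k) w := by
  funext j
  rcases j with j | j
  · simp only [vert, Sum.elim_inl]
    refine congrArg₂ (· + ·) rfl (if_congr ?_ rfl rfl)
    simp [rk, comb]
  · simp only [vert, Sum.elim_inr]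
    rw [if_neg (by simp [rk, comb]; omega), add_zero]

omit [Fintype X] [Fintype W] [DecidableEq X] [DecidableEq W] in
lemma vert_comb_add (p : (X ≃ Fin a) × (W ≃ Fin b)) (x : X → ℕ) (w : W → ℕ) (k : ℕ) :
    vert (Sum.elim x w) (rk (comb p)) (k + a) =
      Sum.elim (fun i => x i + 1) (vert w (rk p.2) k) := by
  funext j
  rcases j with j | j
  · simp only [vert, Sum.elim_inl]
    rw [if_pos (by simp [rk, comb]; omega)]
  · simp only [vert, Sum.elim_inr]
    refine congrArg₂ (· + ·) rfl (if_congr ?_ rfl rfl)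
    simp [rk, comb]; omega

end Split

section Deg
variable {T : Type*} {g : ℕ → T → ZMod 2} {n N : ℕ}

/-- Append the value `t` of an extra (time) axis. -/
def withTime {n : ℕ} (x : Fin n → ℕ) (t : ℕ) : Fin n ⊕ Unit → ℕ := Sum.elim x fun _ => t

/-- The face sums over the wall `t = ε` add up to the degree of the map at time `ε`. -/
lemma sum_face_unit (f : (Fin n ⊕ Unit → ℕ) → T) (ε : ℕ) :
    ∑ r : Fin n ⊕ Unit ≃ Fin (n + 1) with lastDir r = Sum.inr (),
      faceSum N (fun s => U g n (f ∘ s)) r ε = deg g n N (fun x => f (withTime x ε)) := by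
  rw [sum_comb (b := 1) (by simp) (by simp)]
  · rw [filter_true_of_mem (fun p _ => by rw [lastDir_comb (b := 0)]), Fintype.sum_prod_type]
    unfold deg
    refine sum_congr rfl fun r _ => ?_
    rw [Fintype.sum_subsingleton _ (Equiv.ofUnique Unit (Fin 1))]
    unfold faceSum
    rw [lastDir_comb (b := 0), sum_wall_inr]
    refine sum_congr rfl fun x _ => ?_
    have hw : wall N (lastDir (Equiv.ofUnique Unit (Fin 1))) ε = {fun _ => ε} := by
      ext w
      simp only [wall, Fintype.mem_piFinset, mem_singleton]
      constructor
      · intro h; funext i; simpa using h i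
      · rintro rfl i; simp
    rw [hw, sum_singleton]
    refine U_congr g fun k hk => ?_
    simp only [Function.comp]
    rw [vert_comb _ _ _ _ hk]
    rfl
  · intro r hr hr2
    refine absurd ?_ hr2
    intro x
    have h1 : r (Sum.inr ()) = Fin.last n := by
      rw [← hr]; simp [lastDir]
    have h2 : r (Sum.inl x) ≠ Fin.last n := by
      rw [← h1]; exact fun h => by simpa using r.injective h
    have := (r (Sum.inl x)).isLt
    have h3 : (r (Sum.inl x) : ℕ) ≠ n := fun h => h2 (Fin.ext h)
    omega

/-- The walls other than `t = 0` and `t = N` contribute the difference of the degrees at the two ends. -/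
lemma face_sum_eq (f : (Fin n ⊕ Unit → ℕ) → T) (hf : Fine g n f) :
    ∑ r : Fin n ⊕ Unit ≃ Fin (n + 1) with ¬ lastDir r = Sum.inr (),
      (faceSum N (fun s => U g n (f ∘ s)) r 0 + faceSum N (fun s => U g n (f ∘ s)) r N) =
    deg g n N (fun x => f (withTime x 0)) + deg g n N (fun x => f (withTime x N)) := by
  have h := parity (ι := Fin n ⊕ Unit) (m := n) N (fun s => U g n (f ∘ s))
    (fun s s' h => U_congr g fun k hk => by simp [h k hk])
    (fun v _ r => hf.cobdry (close_vert v (rk r)))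
  rw [← sum_filter_add_sum_filter_not univ (fun r => lastDir r = Sum.inr ())] at h
  rw [sum_add_distrib, sum_face_unit, sum_face_unit] at h
  linear_combination h - CharTwo.add_self_eq_zero (deg g n N fun x => f (withTime x 0))
    - CharTwo.add_self_eq_zero (deg g n N fun x => f (withTime x N))

lemma vert_lastDir {ι : Type*} {m : ℕ} (v : ι → ℕ) (r : ι ≃ Fin (m + 1)) {k : ℕ} (hk : k ≤ m) :
    vert v (rk r) k (lastDir r) = v (lastDir r) := by
  simp only [vert]
  rw [if_neg (by simp [rk, lastDir]; omega), add_zero]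

lemma mem_wall {ι : Type*} [Fintype ι] [DecidableEq ι] {j : ι} {ε : ℕ} {v : ι → ℕ}
    (hv : v ∈ wall N j ε) : v j = ε := by
  simp only [wall, Fintype.mem_piFinset] at hv
  simpa using hv j

lemma vert_succ {ι : Type*} {M : ℕ} (v : ι → ℕ) (r : ι ≃ Fin M) (k : ℕ) (j : ι)
    (h : (r j : ℕ) ≠ k) : vert v (rk r) (k + 1) j = vert v (rk r) k j := by
  simp only [vert]
  refine congrArg₂ (· + ·) rfl (if_congr ?_ rfl rfl)
  simp only [rk]; omega

/-- Homotopy invariance of the degree. The map may vary on the boundary of the cube, but only with the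
time `t`; then every simplex in a side wall has, as `n ≥ 2`, an edge on which the map is constant. -/
lemma deg_invariance (hn : 2 ≤ n) (f : (Fin n ⊕ Unit → ℕ) → T) (hf : Fine g n f)
    (h : ℕ → T) (hb : ∀ v j, v (Sum.inl j) = 0 ∨ v (Sum.inl j) = N → f v = h (v (Sum.inr ()))) :
    deg g n N (fun x => f (withTime x 0)) = deg g n N (fun x => f (withTime x N)) := by
  have key : ∀ (r : Fin n ⊕ Unit ≃ Fin (n + 1)) ε, (ε = 0 ∨ ε = N) → ¬ lastDir r = Sum.inr () →
      faceSum N (fun s => U g n (f ∘ s)) r ε = 0 := by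
    intro r ε hε hr
    obtain ⟨j, hj⟩ : ∃ j, lastDir r = Sum.inl j := by
      rcases hl : lastDir r with j | j
      · exact ⟨j, rfl⟩
      · exact absurd hl hr
    refine sum_eq_zero fun v hv => ?_
    have hv := mem_wall hv
    have hfv : ∀ k ≤ n, f (vert v (rk r) k) = h (vert v (rk r) k (Sum.inr ())) := by
      intro k hk
      refine hb _ j ?_
      rw [← hj, vert_lastDir v r hk, hv]; exact hε
    obtain ⟨i, hi, hi2⟩ : ∃ i, i < n ∧ (r (Sum.inr ()) : ℕ) ≠ i := by
      by_cases h0 : (r (Sum.inr ()) : ℕ) = 0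
      · exact ⟨1, by omega, by omega⟩
      · exact ⟨0, by omega, h0⟩
    refine U_eq_zero g hi ?_
    simp only [Function.comp]
    rw [hfv _ (by omega), hfv _ (by omega), vert_succ _ _ _ _ hi2]
  have h2 := face_sum_eq (N := N) f hf
  rw [sum_eq_zero] at h2
  · linear_combination -h2 - CharTwo.add_self_eq_zero (deg g n N fun x => f (withTime x N))
  · intro r hr
    simp only [mem_filter, mem_univ, true_and] at hr
    rw [key r 0 (Or.inl rfl) hr, key r N (Or.inr rfl) hr, add_zero]

lemma deg_const (hn : 1 ≤ n) (x : T) : deg g n N (fun _ => x) = 0 :=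
  sum_eq_zero fun _ _ => sum_eq_zero fun _ _ => U_eq_zero g (i := 0) (by omega) rfl

end Deg

section Hopf
variable {T : Type*} {n N : ℕ} {gP gQ : ℕ → T → ZMod 2}

/-- Exchange of the two blocks of `n` axes; the time axis is fixed. -/
def swapXY (n : ℕ) : Equiv.Perm (Fin n ⊕ (Fin n ⊕ Unit)) where
  toFun := Sum.elim (fun i => Sum.inr (Sum.inl i))
    (Sum.elim Sum.inl fun _ => Sum.inr (Sum.inr ()))
  invFun := Sum.elim (fun i => Sum.inr (Sum.inl i))
    (Sum.elim Sum.inl fun _ => Sum.inr (Sum.inr ()))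
  left_inv := by rintro (i | i | i) <;> rfl
  right_inv := by rintro (i | i | i) <;> rfl

/-- The axis belongs to the second block. -/
def IsY {n : ℕ} (j : Fin n ⊕ (Fin n ⊕ Unit)) : Prop := ∃ i, j = Sum.inr (Sum.inl i)

/-- The combinatorial obstruction. Here `φ` is a symmetric map of a grid on `I^n × I^n` equal to `β` of
the first block when the second is on the boundary, and `ψ` is a contraction of `φ`: constant at
time `0` and equal to `φ` at time `N`. The `2n`-cocycle `φ*Q ∪ ψ*P` is summed over half of the
boundary of `I^n × I^n × I` as in `symm_parity`. It vanishes at time `0`, where `ψ` is constant, and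
at time `N`, where the supports of the classes `Q` and `P` are disjoint. On the walls bounding the
second block `φ` depends on the first block only, so that the sum is a product of two degrees. -/
theorem cup_contra (hn : 2 ≤ n) (φ ψ : (Fin n ⊕ (Fin n ⊕ Unit) → ℕ) → T) (β : (Fin n → ℕ) → T)
    (hφs : ∀ v, φ (v ∘ swapXY n) = φ v) (hψs : ∀ v, ψ (v ∘ swapXY n) = ψ v)
    (hφβ : ∀ v j, v (Sum.inr (Sum.inl j)) = 0 ∨ v (Sum.inr (Sum.inl j)) = N →
      φ v = β (v ∘ Sum.inl))
    (x₀ : T) (hψ0 : ∀ v, v (Sum.inr (Sum.inr ())) = 0 → ψ v = x₀)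
    (hψN : ∀ v, v (Sum.inr (Sum.inr ())) = N → ψ v = φ v)
    (hfQ : Fine gQ n φ) (hfP : Fine gP n ψ)
    (hPQ : ∀ s : ℕ → _ → ℕ, Close s → (∀ k, gQ 0 (φ (s k)) = 0) ∨ (∀ k, gP 0 (φ (s k)) = 0))
    (d : ZMod 2) (hd : ∀ x : Fin n → ℕ, deg gP n N (fun y => ψ (Sum.elim x (withTime y N))) = d) :
    deg gQ n N β * d = 0 := by
  classical
  let c : (ℕ → Fin n ⊕ (Fin n ⊕ Unit) → ℕ) → ZMod 2 := fun s =>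
    U gQ n (φ ∘ s) * U gP n (fun k => ψ (s (k + n)))
  have H := symm_parity (ι := Fin n ⊕ (Fin n ⊕ Unit)) (m := n + n) N c ?_ ?_ (swapXY n) ?_ ?_
    (Sum.inl ⟨0, by omega⟩) (Sum.inr (Sum.inl ⟨0, by omega⟩)) (Sum.inl ⟨1, by omega⟩)
    (by simp) rfl (by simp [swapXY]) (by simp) (by simp) IsY ?_ ?_
  · have H2 := (sum_comb (a := n) (b := n + 1) (X := Fin n) (W := Fin n ⊕ Unit) (by simp)
      (by simp) (fun r => faceSum (m := n + n) N c r 0 + faceSum (m := n + n) N c r N)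
      (fun r => IsY (lastDir (m := n + n) r)) ?_).symm.trans H
    -- On a wall bounding the second block the front `n`-face involves `β` only. After it, the first
    -- block has moved from `x` to `x + 1`, where `ψ` is evaluated along the back `n`-face.
    · have hfs : ∀ (p : (Fin n ≃ Fin n) × (Fin n ⊕ Unit ≃ Fin (n + 1))) ε,
          ¬ lastDir p.2 = Sum.inr () → (ε = 0 ∨ ε = N) →
          faceSum (m := n + n) N c (comb (b := n + 1) p) ε =
          ∑ x ∈ box (Fin n) N, U gQ n (fun k => β (vert x (rk p.1) k)) *
            faceSum N (fun s => U gP n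
              ((fun w => ψ (Sum.elim (fun i => x i + 1) w)) ∘ s)) p.2 ε := by
        intro p ε hp hε
        unfold faceSum
        rw [lastDir_comb (b := n), sum_wall_inr]
        refine sum_congr rfl fun x _ => ?_
        rw [mul_sum]
        refine sum_congr rfl fun w hw => ?_
        have hw := mem_wall hw
        obtain ⟨j, hj⟩ : ∃ j, lastDir p.2 = Sum.inl j := by
          rcases hl : lastDir p.2 with j | j
          · exact ⟨j, rfl⟩
          · exact absurd hl hp
        rw [hj] at hw
        simp only [c]
        congr 1
        · refine U_congr gQ fun k hk => ?_
          simp only [Function.comp]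
          rw [vert_comb _ _ _ _ hk, hφβ _ j]
          · rfl
          · simp only [Sum.elim_inr, hw]; exact hε
        · congr 1
          funext k
          rw [vert_comb_add]
          rfl
      have hY : ∀ p : (Fin n ≃ Fin n) × (Fin n ⊕ Unit ≃ Fin (n + 1)),
          IsY (lastDir (m := n + n) (comb (b := n + 1) p)) ↔ ¬ lastDir p.2 = Sum.inr () := by
        intro p
        rw [lastDir_comb (b := n)]
        rcases lastDir p.2 with i | i
        · simp [IsY]
        · simp [IsY]
      rw [sum_filter, Fintype.sum_prod_type] at H2
      rw [← H2, deg, sum_mul]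
      refine sum_congr rfl fun p1 _ => ?_
      rw [← sum_filter, sum_mul]
      have e1 : ∀ p2 ∈ ({p2 | IsY (lastDir (m := n + n) (comb (b := n + 1) (p1, p2)))} :
          Finset (Fin n ⊕ Unit ≃ Fin (n + 1))),
          faceSum (m := n + n) N c (comb (b := n + 1) (p1, p2)) 0 +
            faceSum (m := n + n) N c (comb (b := n + 1) (p1, p2)) N =
          ∑ x ∈ box (Fin n) N, U gQ n (fun k => β (vert x (rk p1) k)) *
            (faceSum N (fun s => U gP n
              ((fun w => ψ (Sum.elim (fun i => x i + 1) w)) ∘ s)) p2 0 +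
            faceSum N (fun s => U gP n
              ((fun w => ψ (Sum.elim (fun i => x i + 1) w)) ∘ s)) p2 N) := by
        intro p2 hp2
        simp only [mem_filter, mem_univ, true_and, hY] at hp2
        rw [hfs _ 0 hp2 (Or.inl rfl), hfs _ N hp2 (Or.inr rfl), ← sum_add_distrib]
        exact sum_congr rfl fun _ _ => (mul_add _ _ _).symm
      rw [sum_congr rfl e1, sum_comm]
      refine sum_congr rfl fun x _ => ?_
      rw [← mul_sum]
      congr 1
      simp only [hY]
      rw [face_sum_eq]
      · rw [hd]
        have : (fun y : Fin n → ℕ => ψ (Sum.elim (fun i => x i + 1) (withTime y 0))) = fun _ => x₀ := by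
          funext y; exact hψ0 _ rfl
        rw [this, deg_const (by omega), zero_add]
      · intro s hs
        refine hfP (fun k => Sum.elim (fun i => x i + 1) (s k)) ?_
        rintro k l (i | i)
        · exact Nat.le_succ _
        · exact hs k l i
    · intro r hr hr2
      obtain ⟨j, hj⟩ := hr
      -- If the first block does not come first in the order, an edge of the front face runs along the
      -- other axes, where `φ` is constant.
      obtain ⟨i, hi, hi2⟩ := exists_not_inl (by simp) r hr2
      have h0 : ∀ ε, (ε = 0 ∨ ε = N) → faceSum (m := n + n) N c r ε = 0 := by
        intro ε hε
        refine sum_eq_zero fun v hv => ?_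
        have hv := mem_wall hv
        have : ∀ k ≤ n, φ (vert v (rk r) k) = β (vert v (rk r) k ∘ Sum.inl) := by
          intro k hk
          refine hφβ _ j ?_
          have := vert_lastDir (m := n + n) v r (k := k) (by omega)
          rw [hv, hj] at this
          rw [this]; exact hε
        simp only [c]
        rw [U_eq_zero gQ hi, zero_mul]
        simp only [Function.comp_apply]
        rw [this _ (by omega), this _ (by omega)]
        congr 1
        funext x
        exact vert_succ v r i _ fun h => hi2 x (Fin.ext h)
      rw [h0 0 (Or.inl rfl), h0 N (Or.inr rfl), add_zero]
  · intro s s' h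
    have h1 : U gQ n (φ ∘ s) = U gQ n (φ ∘ s') := U_congr gQ fun k hk => by
      simp only [Function.comp]; rw [h k (by omega)]
    have h2 : U gP n (fun k => ψ (s (k + n))) = U gP n (fun k => ψ (s' (k + n))) :=
      U_congr gP fun k hk => by rw [h (k + n) (by omega)]
    simp only [c, h1, h2]
  · intro v _ r
    have e : n + n + 2 = 2 * n + 2 := by ring
    rw [e]
    refine cup_cobdry n (U gQ n) (U gP n) φ ψ (fun s s' h => U_congr gQ h) _ ?_ ?_
    · exact hfQ.cobdry (close_vert _ _)
    · exact hfP.cobdry (fun k l i => close_vert _ _ (k + n) (l + n) i)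
  · rintro (i | i | i) <;> rfl
  · intro s
    simp only [c]
    congr 2
    · funext k; simp only [Function.comp]; exact hφs _
    · funext k; exact hψs _
  · rintro j ⟨i, rfl⟩ ⟨i', h⟩
    simp [swapXY] at h
  · intro r hr1 hr2
    have hl : lastDir r = Sum.inr (Sum.inr ()) := by
      rcases h : lastDir r with i | i | i
      · exact absurd ⟨i, by rw [h]; rfl⟩ hr2
      · exact absurd ⟨i, h⟩ hr1
      · rfl
    have h0 : faceSum N c r 0 = 0 := by
      refine sum_eq_zero fun v hv => ?_
      have hv := mem_wall hv
      have : ∀ k ≤ n, ψ (vert v (rk r) (k + n)) = x₀ := fun k hk => by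
        refine hψ0 _ ?_
        rw [← hl, vert_lastDir _ _ (by omega), hv]
      simp only [c]
      rw [U_eq_zero gP (i := 0) (by omega), mul_zero]
      rw [this _ (by omega), this _ (by omega)]
    have hN : faceSum N c r N = 0 := by
      refine sum_eq_zero fun v hv => ?_
      have hv := mem_wall hv
      have : ψ (vert v (rk r) (0 + n)) = φ (vert v (rk r) n) := by
        rw [zero_add]
        refine hψN _ ?_
        rw [← hl, vert_lastDir _ _ (by omega), hv]
      simp only [c, U]
      rw [this]
      rcases hPQ (vert v (rk r)) (close_vert _ _) with h | h
      · simp [h]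
      · simp [h]
    rw [h0, hN, add_zero]

end Hopf

/-! ### Continuous maps of cubes to the sphere -/

section Mesh

/-- The point `v / N` of the unit cube, clamped to `[0, 1]` in each coordinate. -/
noncomputable def pt {ι : Type*} (N : ℕ) (v : ι → ℕ) : ι → I :=
  fun i => Set.projIcc 0 1 zero_le_one ((v i : ℝ) / N)

lemma dist_pt {ι : Type*} [Fintype ι] (N : ℕ) (v w : ι → ℕ) (h : ∀ i, v i ≤ w i + 1)
    (h' : ∀ i, w i ≤ v i + 1) : dist (pt N v) (pt N w) ≤ 1 / N := by
  refine (dist_pi_le_iff (by positivity)).2 fun i => ?_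
  refine ((LipschitzWith.projIcc zero_le_one).dist_le_mul _ _).trans ?_
  rw [NNReal.coe_one, one_mul, Real.dist_eq, ← sub_div, abs_div, Nat.abs_cast]
  gcongr
  rw [abs_le]
  have h1 : (v i : ℝ) ≤ w i + 1 := by exact_mod_cast h i
  have h2 : (w i : ℝ) ≤ v i + 1 := by exact_mod_cast h' i
  constructor <;> linarith

/-- By the Lebesgue number lemma, a property that holds locally and passes to subsets holds for the
images of all close sequences once the grid is fine enough. -/
lemma mesh {ι T : Type*} [Fintype ι] [TopologicalSpace T] (P : Set T → Prop)
    (mono : ∀ A B, A ⊆ B → P B → P A) (loc : ∀ x, ∃ O ∈ 𝓝 x, P O) (f : (ι → I) → T)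
    (hf : Continuous f) :
    ∀ᶠ N : ℕ in Filter.atTop, ∀ s : ℕ → ι → ℕ, Close s →
      P (Set.range fun k => f (pt N (s k))) := by
  choose O hO hPO using loc
  obtain ⟨δ, hδ, h⟩ := lebesgue_number_lemma_of_metric (s := (Set.univ : Set (ι → I)))
    (c := fun x => f ⁻¹' interior (O x)) isCompact_univ
    (fun x => isOpen_interior.preimage hf)
    (fun z _ => Set.mem_iUnion.2 ⟨f z, mem_interior_iff_mem_nhds.2 (hO _)⟩)
  filter_upwards [(tendsto_one_div_atTop_nhds_zero_nat (𝕜 := ℝ)).eventually_lt_const hδ]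
    with N hN s hs
  obtain ⟨x, hx⟩ := h (pt N (s 0)) trivial
  refine mono _ _ ?_ (hPO x)
  rintro _ ⟨k, rfl⟩
  refine interior_subset (hx (Metric.mem_ball.2 ?_))
  exact (dist_pt N _ _ (fun i => hs _ _ i) (fun i => hs _ _ i)).trans_lt hN

lemma pt_zero {ι : Type*} {N : ℕ} {v : ι → ℕ} {i : ι} (h : v i = 0) : pt N v i = 0 := by
  simp [pt, h]

lemma pt_top {ι : Type*} {N : ℕ} (hN : 0 < N) {v : ι → ℕ} {i : ι} (h : v i = N) :
    pt N v i = 1 := by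
  have : (N : ℝ) ≠ 0 := by positivity
  simp [pt, h, this]

end Mesh

section Model
variable {n : ℕ}

/-- The `n`-sphere as the one-point compactification of the open `n`-cube. -/
abbrev Tn (n : ℕ) : Type := OnePoint (Fin n → Set.Ioo (0 : ℝ) 1)

open Classical in
/-- The quotient map from the closed cube to the sphere that collapses the boundary to `∞`. -/
noncomputable def collapse (z : Fin n → I) : Tn n :=
  if h : ∀ i, (z i : ℝ) ∈ Set.Ioo (0 : ℝ) 1 then OnePoint.some fun i => ⟨(z i : ℝ), h i⟩
  else OnePoint.infty

lemma collapse_bdry (z : Fin n → I) (i : Fin n) (h : z i = 0 ∨ z i = 1) :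
    collapse z = OnePoint.infty := by
  unfold collapse
  rw [dif_neg]
  intro h2
  have := h2 i
  rcases h with h | h <;> simp [h] at this

lemma continuous_collapse : Continuous (collapse : (Fin n → I) → Tn n) := by
  let e : (Fin n → Set.Ioo (0 : ℝ) 1) → (Fin n → I) :=
    Pi.map fun _ => Set.inclusion Set.Ioo_subset_Icc_self
  have he : IsOpenEmbedding e := by
    refine IsOpenEmbedding.piMap fun _ => ⟨IsEmbedding.inclusion _, ?_⟩
    rw [Set.range_inclusion]
    exact isOpen_Ioo.preimage continuous_subtype_val
  have h1 : ∀ w, collapse (e w) = (w : Tn n) := by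
    intro w
    exact dif_pos (fun i => (w i).2)
  have h2 : ∀ z, (∃ w, e w = z) ∨ collapse z = OnePoint.infty := by
    intro z
    by_cases h : ∀ i, (z i : ℝ) ∈ Set.Ioo (0 : ℝ) 1
    · exact Or.inl ⟨fun i => ⟨z i, h i⟩, rfl⟩
    · right; unfold collapse; rw [dif_neg h]
  have hne : ∀ w, collapse (e w) ≠ OnePoint.infty := fun w => by
    rw [h1]; exact OnePoint.coe_ne_infty _
  rw [continuous_def]
  intro s hs
  rw [OnePoint.isOpen_def] at hs
  by_cases h : (OnePoint.infty : Tn n) ∈ s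
  · have : collapse ⁻¹' s = (e '' (((↑) : _ → Tn n) ⁻¹' s)ᶜ)ᶜ := by
      ext z
      rcases h2 z with ⟨w, rfl⟩ | hz
      · simp [h1, he.injective.eq_iff]
      · simp only [Set.mem_preimage, hz, h, Set.mem_compl_iff, true_iff]
        rintro ⟨w, _, rfl⟩
        exact hne w hz
    rw [this, isOpen_compl_iff]
    exact ((hs.1 h).image he.continuous).isClosed
  · have : collapse ⁻¹' s = e '' (((↑) : _ → Tn n) ⁻¹' s) := by
      ext z
      rcases h2 z with ⟨w, rfl⟩ | hz
      · simp [h1, he.injective.eq_iff]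
      · simp only [Set.mem_preimage, hz, h, false_iff]
        rintro ⟨w, _, rfl⟩
        exact hne w hz
    rw [this]
    exact he.isOpenMap _ hs.2

open Classical in
/-- The functions on the sphere from which the cocycle dual to the point `(p, …, p)` is built: number
`0` is the indicator of the open box `(a, b)^n`, number `i + 1` that of `p < xᵢ`, and all of them
vanish at `∞`. -/
noncomputable def gf (n : ℕ) (a p b : ℝ) (i : ℕ) (x : Tn n) : ZMod 2 :=
  x.elim 0 fun w => match i with
    | 0 => if ∀ j, a < (w j : ℝ) ∧ (w j : ℝ) < b then 1 else 0
    | i + 1 => if ∃ h : i < n, p < (w ⟨i, h⟩ : ℝ) then 1 else 0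

variable {a p b : ℝ}

/-- Away from the compact box `[a, b]^n` the box indicator vanishes on a neighbourhood. -/
lemma gf_zero_of (h : 0 < a ∧ b < 1) (x : Tn n) (hx : ∀ w : Fin n → Set.Ioo (0 : ℝ) 1, x = w →
    ∃ i, (w i : ℝ) ∉ Set.Icc a b) : ∃ O ∈ 𝓝 x, ∀ y ∈ O, gf n a p b 0 y = 0 := by
  let K : Set (Fin n → Set.Ioo (0 : ℝ) 1) := Set.univ.pi fun _ => (↑) ⁻¹' Set.Icc a b
  have hK1 : IsClosed K := isClosed_set_pi fun _ _ => isClosed_Icc.preimage continuous_subtype_val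
  have hK2 : IsCompact K := by
    refine isCompact_univ_pi fun _ => ?_
    rw [Subtype.isCompact_iff, Subtype.image_preimage_coe, Set.inter_eq_right.2]
    · exact isCompact_Icc
    · exact fun t ht => ⟨h.1.trans_le ht.1, ht.2.trans_lt h.2⟩
  refine ⟨((↑) '' K)ᶜ, (OnePoint.isOpen_compl_image_coe.2 ⟨hK1, hK2⟩).mem_nhds ?_, ?_⟩
  · rintro ⟨w, hw, rfl⟩
    obtain ⟨i, hi⟩ := hx w rfl
    exact hi (hw i trivial)
  · intro y hy
    induction y using OnePoint.rec with
    | infty => rfl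
    | coe w =>
      simp only [gf, OnePoint.elim_some]
      rw [if_neg]
      intro h
      exact hy ⟨w, fun i _ => ⟨(h i).1.le, (h i).2.le⟩, rfl⟩

/-- Near every point one of the functions is constant: the box indicator near `∞` and near `(p, …, p)`,
and a half-space indicator near every other point. -/
lemma gf_local (h : 0 < a ∧ b < 1) (hp : a < p ∧ p < b) (x : Tn n) :
    ∃ O ∈ 𝓝 x, ∃ i ≤ n, ∀ y ∈ O, ∀ z ∈ O, gf n a p b i y = gf n a p b i z := by
  induction x using OnePoint.rec with
  | infty =>
    obtain ⟨O, hO, hO2⟩ := gf_zero_of (p := p) h (OnePoint.infty : Tn n)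
      (fun w hw => absurd hw.symm (OnePoint.coe_ne_infty _))
    exact ⟨O, hO, 0, Nat.zero_le _, fun y hy z hz => by rw [hO2 y hy, hO2 z hz]⟩
  | coe w =>
    have hcoord : ∀ i : Fin n, Continuous fun w : Fin n → Set.Ioo (0 : ℝ) 1 => (w i : ℝ) :=
      fun i => by fun_prop
    have himg : ∀ D : Set (Fin n → Set.Ioo (0 : ℝ) 1), IsOpen D → w ∈ D →
        ((↑) '' D : Set (Tn n)) ∈ 𝓝 (w : Tn n) := fun D hD hw =>
      (OnePoint.isOpenEmbedding_coe.isOpenMap _ hD).mem_nhds ⟨w, hw, rfl⟩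
    by_cases hall : ∀ i, (w i : ℝ) = p
    · refine ⟨_, himg {w | ∀ i, a < (w i : ℝ) ∧ (w i : ℝ) < b} ?_ ?_, 0, Nat.zero_le _, ?_⟩
      · rw [Set.ofPred_forall]
        exact isOpen_iInter_of_finite fun i => (isOpen_lt continuous_const (hcoord i)).inter
          (isOpen_lt (hcoord i) continuous_const)
      · intro i; rw [hall i]; exact hp
      · rintro _ ⟨y, hy, rfl⟩ _ ⟨z, hz, rfl⟩
        simp only [gf, OnePoint.elim_some]
        rw [if_pos (by exact hy), if_pos (by exact hz)]
    · push Not at hall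
      obtain ⟨i, hi⟩ := hall
      rcases lt_or_gt_of_ne hi with hi | hi
      · refine ⟨_, himg {w | (w i : ℝ) < p} (isOpen_lt (hcoord i) continuous_const) hi,
          i + 1, i.isLt, ?_⟩
        rintro _ ⟨y, hy, rfl⟩ _ ⟨z, hz, rfl⟩
        simp only [gf, OnePoint.elim_some]
        rw [if_neg, if_neg]
        · rintro ⟨_, h⟩; exact lt_asymm h hz
        · rintro ⟨_, h⟩; exact lt_asymm h hy
      · refine ⟨_, himg {w | p < (w i : ℝ)} (isOpen_lt continuous_const (hcoord i)) hi,
          i + 1, i.isLt, ?_⟩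
        rintro _ ⟨y, hy, rfl⟩ _ ⟨z, hz, rfl⟩
        simp only [gf, OnePoint.elim_some]
        rw [if_pos ⟨i.isLt, hy⟩, if_pos ⟨i.isLt, hz⟩]

lemma eventually_fine {ι : Type*} [Fintype ι] (h : 0 < a ∧ b < 1) (hp : a < p ∧ p < b)
    (f : (ι → I) → Tn n) (hf : Continuous f) :
    ∀ᶠ N : ℕ in Filter.atTop, Fine (gf n a p b) n (f ∘ pt N) := by
  filter_upwards [mesh (fun O => ∃ i ≤ n, ∀ y ∈ O, ∀ z ∈ O, gf n a p b i y = gf n a p b i z)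
    (fun A B hAB ⟨i, hi, h⟩ => ⟨i, hi, fun y hy z hz => h y (hAB hy) z (hAB hz)⟩)
    (gf_local h hp) f hf] with N hN s hs
  obtain ⟨i, hi, h⟩ := hN s hs
  exact ⟨i, hi, fun k l => h _ ⟨k, rfl⟩ _ ⟨l, rfl⟩⟩

lemma eventually_disjoint {ι : Type*} [Fintype ι] (hn : 0 < n) {a' p' b' : ℝ} (h : 0 < a ∧ b < 1)
    (h' : 0 < a' ∧ b' < 1) (hb : b < a')
    (f : (ι → I) → Tn n) (hf : Continuous f) :
    ∀ᶠ N : ℕ in Filter.atTop, ∀ s : ℕ → ι → ℕ, Close s →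
      (∀ k, gf n a' p' b' 0 (f (pt N (s k))) = 0) ∨ (∀ k, gf n a p b 0 (f (pt N (s k))) = 0) := by
  have hloc : ∀ x : Tn n, ∃ O ∈ 𝓝 x,
      (∀ y ∈ O, gf n a' p' b' 0 y = 0) ∨ ∀ y ∈ O, gf n a p b 0 y = 0 := by
    intro x
    by_cases hx : ∀ w : Fin n → Set.Ioo (0 : ℝ) 1, x = w → ∃ i, (w i : ℝ) ∉ Set.Icc a b
    · obtain ⟨O, hO, h⟩ := gf_zero_of (p := p) h x hx
      exact ⟨O, hO, Or.inr h⟩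
    · push Not at hx
      obtain ⟨w, rfl, hw⟩ := hx
      obtain ⟨O, hO, h⟩ := gf_zero_of (p := p') h' (w : Tn n) fun w' hw' => by
        have := OnePoint.coe_injective hw'
        subst this
        exact ⟨⟨0, hn⟩, fun h2 => by have := (hw ⟨0, hn⟩).2; have := h2.1; linarith⟩
      exact ⟨O, hO, Or.inl h⟩
  filter_upwards [mesh (fun O => (∀ y ∈ O, gf n a' p' b' 0 y = 0) ∨ ∀ y ∈ O, gf n a p b 0 y = 0)
    (fun A B hAB h => h.imp (fun h y hy => h y (hAB hy)) (fun h y hy => h y (hAB hy)))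
    hloc f hf] with N hN s hs
  exact (hN s hs).imp (fun h k => h _ ⟨k, rfl⟩) (fun h k => h _ ⟨k, rfl⟩)

lemma gf_collapse_zero (h : 0 < a ∧ b < 1) (z : Fin n → I) :
    gf n a p b 0 (collapse z) = if ∀ j, a < (z j : ℝ) ∧ (z j : ℝ) < b then 1 else 0 := by
  unfold collapse
  split_ifs with h1 h2 h2
  · simp only [gf, OnePoint.elim_some]; rw [if_pos h2]
  · simp only [gf, OnePoint.elim_some]; rw [if_neg h2]
  · exact absurd (fun i => ⟨h.1.trans (h2 i).1, (h2 i).2.trans h.2⟩) h1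
  · rfl

lemma gf_collapse_succ (z : Fin n → I) (hz : ∀ i, (z i : ℝ) ∈ Set.Ioo (0 : ℝ) 1) (i : Fin n) :
    gf n a p b (i + 1) (collapse z) = if p < (z i : ℝ) then 1 else 0 := by
  unfold collapse
  rw [dif_pos hz]
  simp only [gf, OnePoint.elim_some]
  refine if_congr ?_ rfl rfl
  simp

/-- The collapse map has degree one: the only simplex contributing is the one with the identity order in
the unit cube that contains the point `(p, …, p)`. -/
lemma deg_collapse (h : 0 < a ∧ b < 1) (hp : a < p ∧ p < b) :
    ∀ᶠ N : ℕ in Filter.atTop, deg (gf n a p b) n N (fun v => collapse (pt N v)) = 1 := by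
  have hlim := tendsto_one_div_atTop_nhds_zero_nat (𝕜 := ℝ)
  filter_upwards [hlim.eventually_lt_const (sub_pos.2 hp.1),
    hlim.eventually_lt_const (sub_pos.2 h.2), Filter.eventually_gt_atTop 0] with N h1 h2 hN
  have hN' : (0 : ℝ) < N := by exact_mod_cast hN
  rw [div_lt_iff₀ hN'] at h1 h2
  have hpt : ∀ v : Fin n → ℕ, (∀ i, v i ≤ N) → ∀ i, (pt N v i : ℝ) = v i / N := by
    intro v hv i
    simp only [pt]
    rw [Set.projIcc_of_mem]
    refine ⟨by positivity, ?_⟩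
    rw [div_le_one hN']
    exact_mod_cast hv i
  set q := ⌊p * N⌋₊ with hq
  have hp0 : 0 < p := h.1.trans hp.1
  have hq1 : (q : ℝ) ≤ p * N := Nat.floor_le (by positivity)
  have hq2 : p * N < q + 1 := Nat.lt_floor_add_one _
  have hp1 : p * N < N := by nlinarith [hp.2.trans h.2]
  have hqN : q < N := by
    have : (q : ℝ) < N := hq1.trans_lt hp1
    exact_mod_cast this
  have key : ∀ (r : Fin n ≃ Fin n) (v : Fin n → ℕ), v ∈ box (Fin n) N →
      U (gf n a p b) n (fun k => collapse (pt N (vert v (rk r) k))) =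
        if r = Equiv.refl _ ∧ v = fun _ => q then 1 else 0 := by
    intro r v hv
    simp only [box, Fintype.mem_piFinset, mem_range] at hv
    have hvert : ∀ k i, vert v (rk r) k i ≤ N := by
      intro k i; simp only [vert]; have := hv i; split_ifs <;> omega
    unfold U
    rw [gf_collapse_zero h]
    have h0 : ∀ j, (pt N (vert v (rk r) 0) j : ℝ) = v j / N := by
      intro j; rw [hpt _ (hvert 0)]; simp [vert]
    simp only [h0]
    by_cases hin : ∀ j, a < (v j : ℝ) / N ∧ (v j : ℝ) / N < b
    · rw [if_pos hin, one_mul]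
      have hint : ∀ k i, (pt N (vert v (rk r) k) i : ℝ) ∈ Set.Ioo (0 : ℝ) 1 := by
        intro k i
        rw [hpt _ (hvert k)]
        have h3 := (hin i).1
        have h4 := (hin i).2
        rw [lt_div_iff₀ hN'] at h3
        rw [div_lt_iff₀ hN'] at h4
        have h5 : (v i : ℝ) ≤ vert v (rk r) k i := by
          exact_mod_cast (by simp [vert] : v i ≤ vert v (rk r) k i)
        have h6 : (vert v (rk r) k i : ℝ) ≤ v i + 1 := by
          have : vert v (rk r) k i ≤ v i + 1 := by simp only [vert]; split_ifs <;> omega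
          exact_mod_cast this
        constructor
        · rw [lt_div_iff₀ hN']; nlinarith [h.1]
        · rw [div_lt_iff₀ hN']; nlinarith
      rw [Finset.prod_range]
      have hfac : ∀ i : Fin n, gf n a p b (i + 1) (collapse (pt N (vert v (rk r) (i + 1)))) +
          gf n a p b (i + 1) (collapse (pt N (vert v (rk r) i))) =
          if r i = i ∧ v i = q then 1 else 0 := by
        intro i
        have hlt : ∀ m : ℕ, p < (m : ℝ) / N ↔ q < m := by
          intro m
          rw [lt_div_iff₀ hN']
          constructor
          · intro h; exact_mod_cast hq1.trans_lt h
          · intro h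
            have : (q : ℝ) + 1 ≤ m := by exact_mod_cast h
            linarith
        rw [gf_collapse_succ _ (hint _), gf_collapse_succ _ (hint _), hpt _ (hvert _),
          hpt _ (hvert _)]
        simp only [hlt]
        by_cases hri : r i = i
        · have e1 : vert v (rk r) (i + 1) i = v i + 1 := by simp [vert, rk, hri]
          have e2 : vert v (rk r) i i = v i := by simp [vert, rk, hri]
          rw [e1, e2]
          rcases lt_trichotomy (v i) q with h | h | h
          · rw [if_neg (by omega), if_neg (by omega), if_neg (by omega)]; rfl
          · rw [if_pos (by omega), if_neg (by omega), if_pos ⟨hri, h⟩]; rfl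
          · rw [if_pos (by omega), if_pos (by omega), if_neg (by omega)]; rfl
        · rw [vert_succ _ _ _ _ fun h => hri (Fin.ext h), CharTwo.add_self_eq_zero,
            if_neg (fun h : r i = i ∧ v i = q => hri h.1)]
      simp only [hfac]
      by_cases hcase : r = Equiv.refl _ ∧ v = fun _ => q
      · rw [if_pos hcase]
        refine prod_eq_one fun i _ => ?_
        rw [if_pos]
        rw [hcase.1, hcase.2]; exact ⟨rfl, rfl⟩
      · rw [if_neg hcase]
        obtain ⟨i, hi⟩ : ∃ i, ¬ (r i = i ∧ v i = q) := by
          by_contra hcon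
          push Not at hcon
          exact hcase ⟨Equiv.ext fun i => (hcon i).1, funext fun i => (hcon i).2⟩
        exact prod_eq_zero (mem_univ i) (if_neg hi)
    · rw [if_neg hin, zero_mul, if_neg]
      rintro ⟨_, rfl⟩
      refine hin fun j => ⟨?_, ?_⟩
      · rw [lt_div_iff₀ hN']; linarith
      · rw [div_lt_iff₀ hN']; nlinarith [hp.2]
  unfold deg
  rw [sum_eq_single (Equiv.refl _), sum_eq_single (fun _ => q)]
  · rw [key _ _ (by simp [box, hqN]), if_pos ⟨rfl, rfl⟩]
  · intro v hv hne
    rw [key _ _ hv, if_neg fun h => hne h.2]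
  · intro hv; exact absurd (by simp [box, hqN]) hv
  · intro r _ hne
    refine sum_eq_zero fun v hv => ?_
    rw [key _ _ hv, if_neg fun h => hne h.1]
  · intro h; exact absurd (mem_univ _) h

/-- There is no symmetric map `F` from `I^n × I^n` to the sphere which equals `β(x)` whenever `y` is on
the boundary, with `β` homotopic to the collapse map through maps that are constant on the boundary
(equal to `e t` at time `t`). Such an `F` would extend the Whitehead square of a degree one map
symmetrically. In `cup_contra` the classes `P` and `Q` are dual to the points with all coordinates
`0.2` and `0.7`, with disjoint boxes. -/
theorem no_symmetric (hn : 2 ≤ n) (F : (Fin n → I) × (Fin n → I) → Tn n) (hF : Continuous F)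
    (hsymm : ∀ x y, F (x, y) = F (y, x)) (β : (Fin n → I) → Tn n)
    (hFβ : ∀ x y i, y i = 0 ∨ y i = 1 → F (x, y) = β x)
    (H : I × (Fin n → I) → Tn n) (hH : Continuous H) (hH0 : ∀ z, H (0, z) = β z)
    (hH1 : ∀ z, H (1, z) = collapse z) (e : I → Tn n)
    (hHe : ∀ t z i, z i = 0 ∨ z i = 1 → H (t, z) = e t) : False := by
  have hP : (0 : ℝ) < 0.1 ∧ (0.3 : ℝ) < 1 := by norm_num
  have hP' : (0.1 : ℝ) < 0.2 ∧ (0.2 : ℝ) < 0.3 := by norm_num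
  have hQ : (0 : ℝ) < 0.6 ∧ (0.8 : ℝ) < 1 := by norm_num
  have hQ' : (0.6 : ℝ) < 0.7 ∧ (0.7 : ℝ) < 0.8 := by norm_num
  -- The map `F` itself, its contraction `F (t x, t y)`, the homotopy `F (t x, y)` that computes the
  -- degree of the end of this contraction for fixed `x`, and the homotopy from `β` to the collapse map.
  let f₁ : (Fin n ⊕ (Fin n ⊕ Unit) → I) → Tn n := fun z =>
    F (fun i => z (Sum.inl i), fun i => z (Sum.inr (Sum.inl i)))
  let f₂ : (Fin n ⊕ (Fin n ⊕ Unit) → I) → Tn n := fun z =>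
    F (fun i => z (Sum.inr (Sum.inr ())) * z (Sum.inl i),
      fun i => z (Sum.inr (Sum.inr ())) * z (Sum.inr (Sum.inl i)))
  let f₃ : (Fin n ⊕ (Fin n ⊕ Unit) → I) → Tn n := fun z =>
    F (fun i => z (Sum.inr (Sum.inr ())) * z (Sum.inl i), fun i => z (Sum.inr (Sum.inl i)))
  let f₄ : (Fin n ⊕ Unit → I) → Tn n := fun z => H (z (Sum.inr ()), fun i => z (Sum.inl i))
  have hf₁ : Continuous f₁ := by fun_prop
  have hf₂ : Continuous f₂ := by fun_prop
  have hf₃ : Continuous f₃ := by fun_prop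
  have hf₄ : Continuous f₄ := by fun_prop
  obtain ⟨N, h1, h2, h3, h4P, h4Q, hd, hcP, hcQ, hN⟩ := ((eventually_fine hQ hQ' f₁ hf₁).and <|
    (eventually_fine hP hP' f₂ hf₂).and <| (eventually_fine hP hP' f₃ hf₃).and <|
    (eventually_fine hP hP' f₄ hf₄).and <| (eventually_fine hQ hQ' f₄ hf₄).and <|
    (eventually_disjoint (n := n) (p := 0.2) (p' := 0.7) (by omega) hP hQ (by norm_num) f₁ hf₁).and
      <| (deg_collapse (n := n) hP hP').and <| (deg_collapse (n := n) hQ hQ').and <|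
    Filter.eventually_gt_atTop 0).exists
  have hpt : ∀ {ι : Type} {v : ι → ℕ} {i : ι}, (v i = 0 ∨ v i = N) →
      (pt N v i = 0 ∨ pt N v i = 1) := fun h => h.imp pt_zero (pt_top hN)
  have hβ : ∀ {a p b : ℝ}, Fine (gf n a p b) n (f₄ ∘ pt N) →
      deg (gf n a p b) n N (fun v => collapse (pt N v)) = 1 →
      deg (gf n a p b) n N (fun v => β (pt N v)) = 1 := by
    intro a p b hf hc
    rw [← hc]
    have h := deg_invariance (N := N) hn (f₄ ∘ pt N) hf
      (fun t => e (pt N (fun _ : Unit => t) ())) fun v j hv => hHe _ _ j (hpt hv)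
    have e0 : (fun x : Fin n → ℕ => (f₄ ∘ pt N) (withTime x 0)) = fun v => β (pt N v) := by
      funext v
      rw [← hH0, ← pt_zero (N := N) (v := withTime v 0) (i := Sum.inr ()) rfl]
      rfl
    have e1 : (fun x : Fin n → ℕ => (f₄ ∘ pt N) (withTime x N)) = fun v => collapse (pt N v) := by
      funext v
      rw [← hH1, ← pt_top hN (v := withTime v N) (i := Sum.inr ()) rfl]
      rfl
    rw [e0, e1] at h
    exact h
  have hz : ∀ y, F (fun _ => 0, y) = β y := fun y => by
    rw [hsymm]; exact hFβ y _ ⟨0, by omega⟩ (Or.inl rfl)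
  have key := cup_contra hn (f₁ ∘ pt N) (f₂ ∘ pt N) (fun v => β (pt N v))
    (fun v => hsymm _ _) (fun v => hsymm _ _) (fun v j hv => hFβ _ _ j (hpt hv))
    (F (fun _ => 0, fun _ => 0)) ?_ ?_ h1 h2 hd 1 ?_
  · rw [hβ h4Q hcQ] at key
    exact absurd key (by decide)
  · intro v hv
    simp only [f₂, Function.comp, pt_zero hv, zero_mul]
  · intro v hv
    simp only [f₂, f₁, Function.comp, pt_top hN hv, one_mul]
  · intro x
    rw [← hβ h4P hcP]
    have h := deg_invariance (g := gf n 0.1 0.2 0.3) (N := N) hn (fun v => (f₃ ∘ pt N) (Sum.elim x v)) ?_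
      (fun t => β (fun i => pt N (fun _ : Unit => t) () * pt N x i)) ?_
    · refine Eq.trans ?_ (h.symm.trans ?_)
      · congr 1
        funext y
        have ht := pt_top hN (v := Sum.elim x (withTime y N)) (i := Sum.inr (Sum.inr ())) rfl
        simp only [f₂, f₃, Function.comp, ht, one_mul]
      · congr 1
        funext y
        have ht := pt_zero (N := N) (v := Sum.elim x (withTime y 0)) (i := Sum.inr (Sum.inr ())) rfl
        simp only [f₃, Function.comp, ht, zero_mul]
        rw [hz]
        rfl
    · intro s hs
      refine h3 (fun k => Sum.elim x (s k)) ?_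
      rintro k l (i | i)
      · exact Nat.le_succ _
      · exact hs k l i
    · intro v j hv
      exact hFβ _ _ j (hpt (ι := Fin n ⊕ (Fin n ⊕ Unit)) (v := Sum.elim x v)
        (i := Sum.inr (Sum.inl j)) hv)

end Model

/-! ### Extension of maps over convex bodies -/

section Extension

/-- The open unit interval is homeomorphic to the line, by an affine map onto `(-1, 1)`. -/
noncomputable def homeoIoo : Set.Ioo (0 : ℝ) 1 ≃ₜ ℝ :=
  Homeomorph.trans (Y := Set.Ioo (-1 : ℝ) 1)
    { toFun := fun x => ⟨2 * (x : ℝ) - 1, by have := x.2.1; linarith, by have := x.2.2; linarith⟩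
      invFun := fun x => ⟨((x : ℝ) + 1) / 2, by have := x.2.1; linarith,
        by have := x.2.2; linarith⟩
      left_inv := fun x => by ext; simp
      right_inv := fun x => by ext; simp only; ring
      continuous_toFun := by fun_prop
      continuous_invFun := by fun_prop }
    (orderIsoIooNegOneOne ℝ).toHomeomorph.symm

/-- `Tn n` is an `n`-sphere. -/
noncomputable def sphereHomeo (n : ℕ) :
    Tn n ≃ₜ Metric.sphere (0 : EuclideanSpace ℝ (Fin (n + 1))) 1 :=
  (Homeomorph.onePointCongr (Homeomorph.piCongrRight fun _ => homeoIoo)).trans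
    (onePointEquivSphereOfFinrankEq (by simp))

lemma collapse_surjective {m : ℕ} (hm : 0 < m) : Function.Surjective (collapse (n := m)) := by
  intro x
  induction x using OnePoint.rec with
  | infty => exact ⟨fun _ => 0, collapse_bdry _ ⟨0, hm⟩ (Or.inl rfl)⟩
  | coe w =>
    refine ⟨fun i => ⟨w i, Set.Ioo_subset_Icc_self (w i).2⟩, ?_⟩
    unfold collapse
    exact dif_pos (fun i => (w i).2)

lemma collapse_eq_iff {m : ℕ} {z z' : Fin m → I} (h : collapse z = collapse z') :
    z = z' ∨ (z ∈ Cube.boundary (Fin m) ∧ z' ∈ Cube.boundary (Fin m)) := by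
  have hb : ∀ z : Fin m → I, ¬ (∀ i, (z i : ℝ) ∈ Set.Ioo (0 : ℝ) 1) →
      z ∈ Cube.boundary (Fin m) := by
    intro z hz
    push Not at hz
    obtain ⟨i, hi⟩ := hz
    refine ⟨i, ?_⟩
    by_contra hc
    push Not at hc
    exact hi ⟨unitInterval.pos_iff_ne_zero.2 hc.1, unitInterval.lt_one_iff_ne_one.2 hc.2⟩
  unfold collapse at h
  split_ifs at h with h1 h2 h2
  · left
    have := OnePoint.coe_injective h
    funext i
    have h3 := congrArg Subtype.val (congrFun this i)
    exact Subtype.ext h3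
  · exact absurd h (OnePoint.coe_ne_infty _)
  · exact absurd h.symm (OnePoint.coe_ne_infty _)
  · exact Or.inr ⟨hb _ h1, hb _ h2⟩

variable {Y : Type} [TopologicalSpace Y]

/-- A reformulation of the vanishing of `π_m` in terms of maps of the cube. -/
lemma exists_nullhomotopy {m : ℕ} {y : Y} (hY : Subsingleton (π_ m Y y)) (b : (Fin m → I) → Y)
    (hb : Continuous b) (hby : ∀ z ∈ Cube.boundary (Fin m), b z = y) :
    ∃ h : C(I × (Fin m → I), Y), (∀ z, h (0, z) = b z) ∧ (∀ z, h (1, z) = y) ∧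
      ∀ t, ∀ z ∈ Cube.boundary (Fin m), h (t, z) = y := by
  let p : GenLoop (Fin m) Y y := ⟨⟨b, hb⟩, hby⟩
  have h : GenLoop.Homotopic p GenLoop.const :=
    Quotient.exact (hY.elim (Quotient.mk (GenLoop.Homotopic.setoid (Fin m) y) p)
      (Quotient.mk (GenLoop.Homotopic.setoid (Fin m) y) GenLoop.const))
  obtain ⟨H⟩ := h
  refine ⟨H.toContinuousMap, fun z => H.apply_zero z, fun z => H.apply_one z, fun t z hz => ?_⟩
  exact (H.eq_fst t hz).trans (hby z hz)

/-- If `π_m(Y)` vanishes at all base points, maps of the `m`-sphere to `Y` extend over the ball. The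
sphere is a collapsed cube `κ : I^m → S^m`, and the nullhomotopy of `f ∘ κ` descends along the quotient
map `(t, z) ↦ (1 - t) κ(z)` onto the ball. -/
lemma extend_ball {m : ℕ} (hm : 0 < m) (hY : ∀ y : Y, Subsingleton (π_ m Y y))
    (f : EuclideanSpace ℝ (Fin (m + 1)) → Y) (hf : ContinuousOn f (Metric.sphere 0 1)) :
    ∃ g : EuclideanSpace ℝ (Fin (m + 1)) → Y, ContinuousOn g (Metric.closedBall 0 1) ∧
      Set.EqOn g f (Metric.sphere 0 1) := by
  let κ : (Fin m → I) → EuclideanSpace ℝ (Fin (m + 1)) := fun z => sphereHomeo m (collapse z)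
  have hκ : Continuous κ :=
    continuous_subtype_val.comp ((sphereHomeo m).continuous.comp continuous_collapse)
  have hκ1 : ∀ z, ‖κ z‖ = 1 := fun z => mem_sphere_zero_iff_norm.1 (sphereHomeo m (collapse z)).2
  have hκs : ∀ v : EuclideanSpace ℝ (Fin (m + 1)), ‖v‖ = 1 → ∃ z, κ z = v := by
    intro v hv
    obtain ⟨z, hz⟩ := collapse_surjective hm ((sphereHomeo m).symm ⟨v, by simpa using hv⟩)
    exact ⟨z, by simp [κ, hz]⟩
  have hκi : ∀ z z', κ z = κ z' →
      z = z' ∨ (z ∈ Cube.boundary (Fin m) ∧ z' ∈ Cube.boundary (Fin m)) := fun z z' h =>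
    collapse_eq_iff ((sphereHomeo m).injective (Subtype.ext h))
  obtain ⟨h, h0, h1, hb⟩ := exists_nullhomotopy
    (hY (f (sphereHomeo m OnePoint.infty))) (fun z => f (κ z))
    (hf.comp_continuous hκ fun z => by simp [hκ1]) (by
      rintro z ⟨i, hi⟩
      simp only [κ, collapse_bdry z i hi])
  let q : C(I × (Fin m → I), Metric.closedBall (0 : EuclideanSpace ℝ (Fin (m + 1))) 1) :=
    ⟨fun p => ⟨(1 - (p.1 : ℝ)) • κ p.2, by
      rw [mem_closedBall_zero_iff, norm_smul, hκ1, mul_one, Real.norm_eq_abs, abs_le]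
      have := p.1.2.1
      have := p.1.2.2
      constructor <;> linarith⟩, by fun_prop⟩
  have hqn : ∀ p, ‖(q p : EuclideanSpace ℝ (Fin (m + 1)))‖ = 1 - (p.1 : ℝ) := by
    intro p
    change ‖(1 - (p.1 : ℝ)) • κ p.2‖ = _
    rw [norm_smul, hκ1, mul_one, Real.norm_eq_abs, abs_of_nonneg]
    linarith [p.1.2.2]
  have hqs : Function.Surjective q := by
    rintro ⟨v, hv⟩
    rw [mem_closedBall_zero_iff] at hv
    by_cases hv0 : v = 0
    · refine ⟨(1, fun _ => 0), Subtype.ext ?_⟩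
      simp [q, hv0]
    · have hv1 : 0 < ‖v‖ := norm_pos_iff.2 hv0
      obtain ⟨z, hz⟩ := hκs (‖v‖⁻¹ • v) (by rw [norm_smul, norm_inv, norm_norm]; field_simp)
      refine ⟨(⟨1 - ‖v‖, by linarith, by linarith⟩, z), Subtype.ext ?_⟩
      simp only [q, ContinuousMap.coe_mk, hz, sub_sub_cancel, smul_smul]
      rw [mul_inv_cancel₀ hv1.ne', one_smul]
  have hq : IsQuotientMap q := q.continuous.isClosedMap.isQuotientMap q.continuous hqs
  have hfac : ∀ p p', q p = q p' → h p = h p' := by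
    rintro ⟨t, z⟩ ⟨t', z'⟩ hpp
    have ht : t = t' := by
      have e1 := hqn (t, z)
      have e2 := hqn (t', z')
      rw [hpp] at e1
      ext
      simp only at e1 e2
      linarith
    subst ht
    by_cases ht : t = 1
    · rw [ht, h1, h1]
    · have ht' : (1 - (t : ℝ)) ≠ 0 := by
        intro h0
        exact ht (Subtype.ext (by rw [Set.Icc.coe_one]; linarith))
      have hk : κ z = κ z' := smul_right_injective _ ht' (congrArg Subtype.val hpp)
      rcases hκi z z' hk with rfl | ⟨hz, hz'⟩
      · rfl
      · rw [hb t z hz, hb t z' hz']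
  let G := hq.lift h hfac
  classical
  refine ⟨fun v => if hv : v ∈ Metric.closedBall 0 1 then G ⟨v, hv⟩ else f v, ?_, ?_⟩
  · rw [continuousOn_iff_continuous_domRestrict]
    convert G.continuous using 1
    funext v
    simp only [Set.domRestrict_apply]
    exact dif_pos v.2
  · intro v hv
    have hv2 := Metric.sphere_subset_closedBall hv
    simp only [dif_pos hv2]
    obtain ⟨z, hz⟩ := hκs v (by simpa using hv)
    have : (⟨v, hv2⟩ : Metric.closedBall (0 : EuclideanSpace ℝ (Fin (m + 1))) 1) = q (0, z) :=
      Subtype.ext (by simp [q, hz])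
    rw [this, ← hz, ← h0 z]
    exact congrFun (congrArg DFunLike.coe (hq.lift_comp h hfac)) (0, z)

/-- The same for the boundary of any convex body of dimension `m + 1`, which is homeomorphic to a ball. -/
lemma extend_convex {m : ℕ} (hm : 0 < m) (hY : ∀ y : Y, Subsingleton (π_ m Y y))
    {P : Type} [Fintype P] (hP : Fintype.card P = m + 1) {K : Set (P → ℝ)} (hc : Convex ℝ K)
    (hcl : IsClosed K) (hne : (interior K).Nonempty) (hb : Bornology.IsBounded K)
    (f : (P → ℝ) → Y) (hf : ContinuousOn f (frontier K)) :
    ∃ g : (P → ℝ) → Y, ContinuousOn g K ∧ Set.EqOn g f (frontier K) := by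
  let L : (P → ℝ) ≃L[ℝ] EuclideanSpace ℝ (Fin (m + 1)) :=
    ContinuousLinearEquiv.ofFinrankEq (by simp [hP])
  let K' := L '' K
  have hfr : frontier K' = L '' frontier K := (L.toHomeomorph.image_frontier K).symm
  have hint : interior K' = L '' interior K := (L.toHomeomorph.image_interior K).symm
  have hK'c : closure K' = L '' K := by
    rw [← hcl.closure_eq, show K' = L '' K from rfl]
    rw [hcl.closure_eq]
    exact ((L.toHomeomorph.isClosedMap) _ hcl).closure_eq
  obtain ⟨Φ, -, h1, h2⟩ := exists_homeomorph_image_interior_closure_frontier_eq_unitBall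
    (s := K') (hc.linear_image L.toLinearEquiv.toLinearMap) (by rw [hint]; exact hne.image _)
    (hb.image (L : (P → ℝ) →L[ℝ] EuclideanSpace ℝ (Fin (m + 1))))
  rw [hK'c] at h1
  rw [hfr] at h2
  let E : (P → ℝ) ≃ₜ EuclideanSpace ℝ (Fin (m + 1)) := L.toHomeomorph.trans Φ
  have hEK : ∀ x ∈ K, E x ∈ Metric.closedBall 0 1 := fun x hx => by
    rw [← h1]; exact ⟨_, ⟨x, hx, rfl⟩, rfl⟩
  have hEf : ∀ x ∈ frontier K, E x ∈ Metric.sphere 0 1 := fun x hx => by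
    rw [← h2]; exact ⟨_, ⟨x, hx, rfl⟩, rfl⟩
  have hEf' : ∀ v ∈ Metric.sphere 0 1, E.symm v ∈ frontier K := fun v hv => by
    rw [← h2] at hv
    obtain ⟨_, ⟨x, hx, rfl⟩, rfl⟩ := hv
    have : E.symm (Φ (L x)) = x := E.symm_apply_apply x
    rwa [this]
  obtain ⟨g, hg, hgf⟩ := extend_ball hm hY (f ∘ E.symm)
    (hf.comp E.symm.continuous.continuousOn hEf')
  refine ⟨g ∘ E, hg.comp E.continuous.continuousOn hEK, fun x hx => ?_⟩
  simp [hgf (hEf x hx)]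

end Extension

/-! ### Symmetric extension of the Whitehead square -/

section SymmetricExtension
variable {n : ℕ} {Y : Type} [TopologicalSpace Y]

/-- Some coordinate is `0` or `1`; inside the unit cube this describes the boundary. -/
def OnFace (x : Fin n → ℝ) : Prop := ∃ i, x i = 0 ∨ x i = 1

lemma isClosed_onFace : IsClosed {x : Fin n → ℝ | OnFace x} := by
  have : {x : Fin n → ℝ | OnFace x} = ⋃ i, ({x | x i = 0} ∪ {x | x i = 1}) := by
    ext x; simp [OnFace]
  rw [this]
  exact isClosed_iUnion_of_finite fun i =>
    (isClosed_eq (continuous_apply i) continuous_const).union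
      (isClosed_eq (continuous_apply i) continuous_const)

/-- Pairs of points of the unit cube whose first `k` coordinates agree. -/
def diag (n k : ℕ) : Set ((Fin n → ℝ) × (Fin n → ℝ)) :=
  {p | p.1 ∈ Set.Icc 0 1 ∧ p.2 ∈ Set.Icc 0 1 ∧ ∀ i : Fin n, i.val < k → p.1 i = p.2 i}

/-- The boundary of the product of two unit cubes. -/
def sides (n : ℕ) : Set ((Fin n → ℝ) × (Fin n → ℝ)) :=
  {p | p.1 ∈ Set.Icc 0 1 ∧ p.2 ∈ Set.Icc 0 1 ∧ (OnFace p.1 ∨ OnFace p.2)}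

lemma isClosed_diag (k : ℕ) : IsClosed (diag n k) := by
  have : diag n k = (Prod.fst ⁻¹' Set.Icc 0 1 ∩ Prod.snd ⁻¹' Set.Icc 0 1) ∩
      ⋂ i : Fin n, ⋂ _ : i.val < k, {p : (Fin n → ℝ) × (Fin n → ℝ) | p.1 i = p.2 i} := by
    ext p; simp [diag, and_assoc]
  rw [this]
  refine ((isClosed_Icc.preimage continuous_fst).inter (isClosed_Icc.preimage continuous_snd)).inter
    (isClosed_iInter fun i => isClosed_iInter fun _ => isClosed_eq (by fun_prop) (by fun_prop))

lemma isClosed_sides₁ : IsClosed (sides n ∩ {p | OnFace p.1}) := by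
  have : sides n ∩ {p | OnFace p.1} = (Prod.fst ⁻¹' Set.Icc 0 1 ∩ Prod.snd ⁻¹' Set.Icc 0 1) ∩
      Prod.fst ⁻¹' {x | OnFace x} := by
    ext p; simp only [sides, Set.mem_inter_iff, Set.mem_ofPred_eq, Set.mem_preimage]; tauto
  rw [this]
  exact ((isClosed_Icc.preimage continuous_fst).inter (isClosed_Icc.preimage continuous_snd)).inter
    (isClosed_onFace.preimage continuous_fst)

lemma isClosed_sides₂ : IsClosed (sides n ∩ {p | OnFace p.2}) := by
  have : sides n ∩ {p | OnFace p.2} = (Prod.fst ⁻¹' Set.Icc 0 1 ∩ Prod.snd ⁻¹' Set.Icc 0 1) ∩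
      Prod.snd ⁻¹' {x | OnFace x} := by
    ext p; simp only [sides, Set.mem_inter_iff, Set.mem_ofPred_eq, Set.mem_preimage]; tauto
  rw [this]
  exact ((isClosed_Icc.preimage continuous_fst).inter (isClosed_Icc.preimage continuous_snd)).inter
    (isClosed_onFace.preimage continuous_snd)

lemma sides_eq : sides n = (sides n ∩ {p | OnFace p.1}) ∪ (sides n ∩ {p | OnFace p.2}) := by
  ext p
  simp only [sides, Set.mem_inter_iff, Set.mem_ofPred_eq, Set.mem_union]; tauto

lemma isClosed_sides : IsClosed (sides n) := by
  rw [sides_eq]; exact isClosed_sides₁.union isClosed_sides₂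

/-- The map given on `∂(I^n × I^n)` by `b` of the coordinate that need not be on the boundary extends
continuously to the pairs agreeing in their first `k` coordinates, invariantly under exchange. -/
def SymmExt (n k : ℕ) (b : (Fin n → ℝ) → Y) : Prop :=
  ∃ F : (Fin n → ℝ) × (Fin n → ℝ) → Y, ContinuousOn F (diag n k ∪ sides n) ∧
    (∀ p ∈ diag n k ∪ sides n, F p.swap = F p) ∧
    ∀ p ∈ sides n, (OnFace p.2 → F p = b p.1) ∧ (OnFace p.1 → F p = b p.2)

/-- If the points agree in all coordinates but the last, they are the pairs `((x, s), (x, t))`. There the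
extension is `b` at height `s + t`, taken modulo `1`: for fixed `x` the path `b (x, ·)` is run through
twice along the diagonal, and the formula is symmetric in `s` and `t`. -/
lemma symmExt_base (l : Fin n) (hl : l.val + 1 = n) (b : (Fin n → ℝ) → Y) (hb : Continuous b)
    (y : Y) (hby : ∀ x, OnFace x → b x = y) : SymmExt n l b := by
  let B : (Fin n → ℝ) × (Fin n → ℝ) → Y := fun p =>
    if p.1 l + p.2 l ≤ 1 then b (Function.update p.1 l (p.1 l + p.2 l))
    else b (Function.update p.1 l (p.1 l + p.2 l - 1))
  have hB : Continuous B := by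
    refine Continuous.if_le ?_ ?_ (by fun_prop) continuous_const fun p hp => ?_
    · exact hb.comp (continuous_fst.update l (by fun_prop))
    · exact hb.comp (continuous_fst.update l (by fun_prop))
    · rw [hp, hby _ ⟨l, by simp⟩, hby _ ⟨l, by simp⟩]
  have hupd : ∀ p ∈ diag n l, ∀ s, Function.update p.1 l s = Function.update p.2 l s := by
    intro p hp s
    funext i
    by_cases hi : i = l
    · subst hi; simp
    · rw [Function.update_of_ne hi, Function.update_of_ne hi]
      refine hp.2.2 i ?_
      have := i.isLt
      have : i.val ≠ l.val := fun h => hi (Fin.ext h)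
      omega
  have hBs : ∀ p ∈ diag n l, B p.swap = B p := by
    intro p hp
    simp only [B, Prod.fst_swap, Prod.snd_swap, hupd p hp, add_comm (p.2 l)]
  have hswap : ∀ p ∈ diag n l, p.swap ∈ diag n l := fun p hp =>
    ⟨hp.2.1, hp.1, fun i hi => (hp.2.2 i hi).symm⟩
  have hB2 : ∀ p ∈ diag n l, OnFace p.2 → B p = b p.1 := by
    rintro p hp ⟨i, hi⟩
    by_cases hil : i = l
    · subst hil
      have h0 : (0 : ℝ) ≤ p.1 i := hp.1.1 i
      have h1 : p.1 i ≤ 1 := hp.1.2 i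
      rcases hi with hi | hi
      · simp only [B, hi, add_zero, if_pos h1, Function.update_eq_self]
      · simp only [B, hi, add_sub_cancel_right, Function.update_eq_self]
        by_cases h : p.1 i = 0
        · rw [if_pos (by linarith), hby _ ⟨i, Or.inl h⟩, hby _ ⟨i, by simp [h]⟩]
        · rw [if_neg]
          have := lt_of_le_of_ne h0 (Ne.symm h)
          linarith
    · have hlt : i.val < l.val := by
        have := i.isLt
        have : i.val ≠ l.val := fun h => hil (Fin.ext h)
        omega
      have hi' := hi
      rw [← hp.2.2 i hlt] at hi'
      have hu : ∀ s, OnFace (Function.update p.1 l s) := fun s =>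
        ⟨i, by rwa [Function.update_of_ne hil]⟩
      simp only [B, hby _ (hu _), ite_self]
      exact (hby _ ⟨i, hi'⟩).symm
  have hB1 : ∀ p ∈ diag n l, OnFace p.1 → B p = b p.2 := fun p hp h => by
    rw [← hBs p hp]; exact hB2 _ (hswap p hp) h
  classical
  let F : (Fin n → ℝ) × (Fin n → ℝ) → Y := fun p =>
    if OnFace p.2 then b p.1 else if OnFace p.1 then b p.2 else B p
  have hF2 : ∀ p, OnFace p.2 → F p = b p.1 := fun p h => if_pos h
  have hF1 : ∀ p, OnFace p.1 → F p = b p.2 := fun p h => by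
    by_cases h2 : OnFace p.2
    · rw [hF2 p h2, hby _ h, hby _ h2]
    · simp only [F, if_neg h2, if_pos h]
  have hFB : ∀ p ∈ diag n l, F p = B p := fun p hp => by
    by_cases h2 : OnFace p.2
    · rw [hF2 p h2, hB2 p hp h2]
    · by_cases h1 : OnFace p.1
      · rw [hF1 p h1, hB1 p hp h1]
      · simp only [F, if_neg h2, if_neg h1]
  refine ⟨F, ?_, ?_, fun p _ => ⟨hF2 p, hF1 p⟩⟩
  · rw [sides_eq]
    refine ContinuousOn.union_of_isClosed (hB.continuousOn.congr hFB)
      (ContinuousOn.union_of_isClosed ?_ ?_ isClosed_sides₁ isClosed_sides₂) (isClosed_diag _)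
      (isClosed_sides₁.union isClosed_sides₂)
    · exact (hb.comp continuous_snd).continuousOn.congr fun p hp => hF1 p hp.2
    · exact (hb.comp continuous_fst).continuousOn.congr fun p hp => hF2 p hp.2
  · rintro p (hp | hp)
    · rw [hFB p hp, hFB _ (hswap p hp), hBs p hp]
    · rcases hp.2.2 with h | h
      · rw [hF1 p h]; exact hF2 _ h
      · rw [hF2 p h]; exact hF1 _ h

/-- The points of the unit cube with `z s ≤ z t`. -/
def half {P : Type} (s t : P) : Set (P → ℝ) := {z | z ∈ Set.Icc 0 1 ∧ z s ≤ z t}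

lemma isClosed_half {P : Type} (s t : P) : IsClosed (half s t) :=
  isClosed_Icc.inter (isClosed_le (continuous_apply s) (continuous_apply t))

lemma interior_half {P : Type} [Fintype P] {s t : P} (hst : s ≠ t) :
    interior (half s t) = {z | (∀ p, z p ∈ Set.Ioo (0 : ℝ) 1) ∧ z s < z t} := by
  classical
  apply Set.Subset.antisymm
  · intro z hz
    refine ⟨fun p => ?_, ?_⟩
    · have h1 : half s t ⊆ (fun z : P → ℝ => z p) ⁻¹' Set.Icc 0 1 := fun z hz =>
        ⟨hz.1.1 p, hz.1.2 p⟩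
      have h2 := interior_mono h1 hz
      rwa [← (isOpenMap_eval p).preimage_interior_eq_interior_preimage (continuous_apply p),
        interior_Icc] at h2
    · have h1 : half s t ⊆ (fun z : P → ℝ => z t - z s) ⁻¹' Set.Ici 0 := fun z hz =>
        sub_nonneg.2 hz.2
      have h2 := interior_mono h1 hz
      let ℓ : (P → ℝ) →ₗ[ℝ] ℝ :=
        LinearMap.proj (R := ℝ) (φ := fun _ : P => ℝ) t - LinearMap.proj s
      have hℓ : IsOpenMap ℓ := ℓ.isOpenMap_of_finiteDimensional fun r =>
        ⟨Function.update 0 t r, by simp [ℓ, Function.update_of_ne hst]⟩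
      have h3 := hℓ.preimage_interior_eq_interior_preimage (by fun_prop) (Set.Ici 0)
      have h4 : z ∈ ℓ ⁻¹' interior (Set.Ici 0) := by rw [h3]; exact h2
      rw [interior_Ici] at h4
      exact sub_pos.1 h4
  · have ho : IsOpen ((⋂ p, (fun z : P → ℝ => z p) ⁻¹' Set.Ioo 0 1) ∩ {z | z s < z t}) :=
      (isOpen_iInter_of_finite fun p => isOpen_Ioo.preimage (continuous_apply p)).inter
        (isOpen_lt (continuous_apply s) (continuous_apply t))
    refine fun z hz => interior_maximal ?_ ho ⟨Set.mem_iInter.2 hz.1, hz.2⟩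
    rintro z ⟨hz1, hz2⟩
    rw [Set.mem_iInter] at hz1
    exact ⟨⟨fun p => (hz1 p).1.le, fun p => (hz1 p).2.le⟩, le_of_lt hz2⟩

lemma mem_frontier_half {P : Type} [Fintype P] {s t : P} (hst : s ≠ t) {z : P → ℝ} :
    z ∈ frontier (half s t) ↔ z ∈ half s t ∧ ((∃ p, z p = 0 ∨ z p = 1) ∨ z s = z t) := by
  rw [(isClosed_half s t).frontier_eq, Set.mem_sdiff, interior_half hst]
  refine and_congr_right fun hz => ?_
  constructor
  · intro h
    by_contra hc
    push Not at hc
    exact h ⟨fun p => ⟨lt_of_le_of_ne (hz.1.1 p) (Ne.symm (hc.1 p).1),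
      lt_of_le_of_ne (hz.1.2 p) (hc.1 p).2⟩, lt_of_le_of_ne hz.2 hc.2⟩
  · rintro (⟨p, hp | hp⟩ | hp) ⟨h1, h2⟩
    · exact (h1 p).1.ne' hp
    · exact (h1 p).2.ne hp
    · exact h2.ne hp

/-- Induction on `n - k`. The pairs agreeing in their first `k` coordinates form a cube of dimension
`2n - k ≥ n + 2`, which the hyperplane `x_k = y_k` cuts into two halves exchanged by the symmetry. One
half is a convex body, over which the map extends as `π_{2n-k-1}(Y)` vanishes; the other half is
filled by reflection. -/
lemma symmExt_step {k : ℕ} (hk : k + 2 ≤ n) (hY : ∀ m, n < m → ∀ y : Y, Subsingleton (π_ m Y y))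
    (b : (Fin n → ℝ) → Y) (h : SymmExt n (k + 1) b) : SymmExt n k b := by
  obtain ⟨F, hF, hFs, hFb⟩ := h
  -- Coordinates on the pairs agreeing in their first `k` coordinates: all those of the first point
  -- and, from the `k`-th on, those of the second.
  let P := Fin n ⊕ {i : Fin n // k ≤ i.val}
  let kk : Fin n := ⟨k, by omega⟩
  let s : P := Sum.inl kk
  let t : P := Sum.inr ⟨kk, le_rfl⟩
  have hst : s ≠ t := Sum.inl_ne_inr
  let Φ : (P → ℝ) → (Fin n → ℝ) × (Fin n → ℝ) := fun z =>
    (fun i => z (Sum.inl i), fun i => if h : k ≤ i.val then z (Sum.inr ⟨i, h⟩) else z (Sum.inl i))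
  let Ψ : (Fin n → ℝ) × (Fin n → ℝ) → P → ℝ := fun p => Sum.elim p.1 fun i => p.2 i
  have hΦ : Continuous Φ := by
    refine Continuous.prodMk (by fun_prop) (continuous_pi fun i => ?_)
    by_cases h : k ≤ i.val
    · simp only [h, dif_pos]; fun_prop
    · simp only [h, dif_neg, not_false_iff]; fun_prop
  have hΨ : Continuous Ψ := by
    refine continuous_pi ?_
    rintro (i | i)
    · exact (continuous_apply i).comp continuous_fst
    · exact (continuous_apply i.1).comp continuous_snd
  have hΦΨ : ∀ p ∈ diag n k, Φ (Ψ p) = p := by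
    intro p hp
    refine Prod.ext rfl (funext fun i => ?_)
    by_cases h : k ≤ i.val
    · simp [Φ, Ψ, h]
    · simp only [Φ, Ψ, dif_neg h, Sum.elim_inl]
      exact hp.2.2 i (not_le.1 h)
  have hΨK : ∀ p ∈ diag n k, p.1 kk ≤ p.2 kk → Ψ p ∈ half s t := by
    intro p hp hle
    refine ⟨⟨?_, ?_⟩, hle⟩
    · rintro (i | i)
      · exact hp.1.1 i
      · exact hp.2.1.1 i
    · rintro (i | i)
      · exact hp.1.2 i
      · exact hp.2.1.2 i
  have hΦfr : ∀ z ∈ frontier (half s t), Φ z ∈ diag n (k + 1) ∪ sides n := by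
    intro z hz
    rw [mem_frontier_half hst] at hz
    obtain ⟨⟨hz1, -⟩, hz2⟩ := hz
    have c1 : (Φ z).1 ∈ Set.Icc 0 1 := ⟨fun i => hz1.1 _, fun i => hz1.2 _⟩
    have c2 : (Φ z).2 ∈ Set.Icc 0 1 := by
      refine ⟨fun i => ?_, fun i => ?_⟩ <;> simp only [Φ] <;> split_ifs
      · exact hz1.1 _
      · exact hz1.1 _
      · exact hz1.2 _
      · exact hz1.2 _
    rcases hz2 with ⟨i | i, hi⟩ | hz2
    · exact Or.inr ⟨c1, c2, Or.inl ⟨i, hi⟩⟩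
    · refine Or.inr ⟨c1, c2, Or.inr ⟨i, ?_⟩⟩
      simp only [Φ, dif_pos i.2]
      exact hi
    · refine Or.inl ⟨c1, c2, fun i hi => ?_⟩
      simp only [Φ]
      split_ifs with hki
      · have : i = kk := Fin.ext (by simp [kk]; omega)
        subst this
        exact hz2
      · rfl
  have hΨfr : ∀ p ∈ diag n k, p.1 kk ≤ p.2 kk → p ∈ sides n ∨ p.1 kk = p.2 kk →
      Ψ p ∈ frontier (half s t) := by
    intro p hp hle h
    rw [mem_frontier_half hst]
    refine ⟨hΨK p hp hle, h.imp (fun h => ?_) id⟩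
    rcases h.2.2 with ⟨i, hi⟩ | ⟨i, hi⟩
    · exact ⟨Sum.inl i, hi⟩
    · by_cases hki : k ≤ i.val
      · exact ⟨Sum.inr ⟨i, hki⟩, hi⟩
      · exact ⟨Sum.inl i, by rwa [← hp.2.2 i (not_le.1 hki)] at hi⟩
  have hcard : Fintype.card P = (2 * n - k - 1) + 1 := by
    have : Fintype.card {i : Fin n // k ≤ i.val} = n - k := by
      rw [Fintype.card_subtype]
      have : (univ.filter fun i : Fin n => k ≤ i.val) = Finset.Ici kk := by
        ext i; simp [kk, Fin.le_def]
      rw [this, Fin.card_Ici]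
    rw [Fintype.card_sum, Fintype.card_fin, this]
    omega
  have hconv : Convex ℝ (half s t) := by
    have h2 : Convex ℝ {z : P → ℝ | z s ≤ z t} := by
      intro z hz w hw a c ha hc _
      change a * z s + c * w s ≤ a * z t + c * w t
      exact add_le_add (mul_le_mul_of_nonneg_left hz ha) (mul_le_mul_of_nonneg_left hw hc)
    exact (convex_Icc 0 1).inter h2
  have hne : (interior (half s t)).Nonempty := by
    rw [interior_half hst]
    refine ⟨Sum.elim (fun _ => 1 / 3) fun _ => 2 / 3, ?_, ?_⟩
    · rintro (i | i) <;> simp <;> norm_num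
    · simp only [s, t, Sum.elim_inl, Sum.elim_inr]; norm_num
  have hbdd : Bornology.IsBounded (half s t) :=
    (isCompact_Icc (a := (0 : P → ℝ)) (b := 1)).isBounded.subset fun z hz => hz.1
  obtain ⟨G, hG, hGF⟩ := extend_convex (by omega) (hY (2 * n - k - 1) (by omega)) hcard hconv
    (isClosed_half s t) hne hbdd (F ∘ Φ) (hF.comp hΦ.continuousOn hΦfr)
  have hGΨ : ∀ p ∈ diag n k, p.1 kk ≤ p.2 kk → p ∈ sides n ∨ p.1 kk = p.2 kk →
      G (Ψ p) = F p := by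
    intro p hp hle h
    rw [hGF (hΨfr p hp hle h), Function.comp, hΦΨ p hp]
  have hswap : ∀ p ∈ diag n k, p.swap ∈ diag n k := fun p hp =>
    ⟨hp.2.1, hp.1, fun i hi => (hp.2.2 i hi).symm⟩
  have hswap' : ∀ p ∈ sides n, p.swap ∈ sides n := fun p hp => ⟨hp.2.1, hp.1, hp.2.2.symm⟩
  have hdiag : ∀ p ∈ diag n k, p.1 kk = p.2 kk → p ∈ diag n (k + 1) := by
    intro p hp h
    refine ⟨hp.1, hp.2.1, fun i hi => ?_⟩
    by_cases hik : i = kk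
    · rw [hik, h]
    · refine hp.2.2 i ?_
      have : i.val ≠ k := fun h => hik (Fin.ext h)
      omega
  classical
  let F' : (Fin n → ℝ) × (Fin n → ℝ) → Y := fun p =>
    if p ∈ sides n then F p else if p.1 kk ≤ p.2 kk then G (Ψ p) else G (Ψ p.swap)
  have hF's : ∀ p ∈ sides n, F' p = F p := fun p hp => if_pos hp
  have hF'1 : ∀ p ∈ diag n k, p.1 kk ≤ p.2 kk → F' p = G (Ψ p) := by
    intro p hp hle
    by_cases hs : p ∈ sides n
    · rw [hF's p hs, hGΨ p hp hle (Or.inl hs)]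
    · simp only [F', if_neg hs, if_pos hle]
  have hF'2 : ∀ p ∈ diag n k, p.2 kk ≤ p.1 kk → F' p = G (Ψ p.swap) := by
    intro p hp hle
    by_cases hs : p ∈ sides n
    · rw [hF's p hs, hGΨ p.swap (hswap p hp) hle (Or.inl (hswap' p hs)),
        hFs p (Or.inr hs)]
    · by_cases heq : p.1 kk = p.2 kk
      · simp only [F', if_neg hs, if_pos heq.le]
        rw [hGΨ p hp heq.le (Or.inr heq), hGΨ p.swap (hswap p hp) hle (Or.inr heq.symm),
          hFs p (Or.inl (hdiag p hp heq))]
      · have : ¬ p.1 kk ≤ p.2 kk := fun h => heq (le_antisymm h hle)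
        simp only [F', if_neg hs, if_neg this]
  have hcl1 : IsClosed (diag n k ∩ {p | p.1 kk ≤ p.2 kk}) :=
    (isClosed_diag k).inter (isClosed_le (by fun_prop) (by fun_prop))
  have hcl2 : IsClosed (diag n k ∩ {p | p.2 kk ≤ p.1 kk}) :=
    (isClosed_diag k).inter (isClosed_le (by fun_prop) (by fun_prop))
  have hcov : diag n k = (diag n k ∩ {p | p.1 kk ≤ p.2 kk}) ∪ (diag n k ∩ {p | p.2 kk ≤ p.1 kk}) := by
    rw [← Set.inter_union_distrib_left]
    exact (Set.inter_eq_left.2 fun p _ => le_total (p.1 kk) (p.2 kk)).symm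
  refine ⟨F', ?_, ?_, fun p hp => ?_⟩
  · rw [hcov]
    refine ContinuousOn.union_of_isClosed (ContinuousOn.union_of_isClosed ?_ ?_ hcl1 hcl2) ?_
      (hcl1.union hcl2) isClosed_sides
    · exact (hG.comp hΨ.continuousOn fun p hp => hΨK p hp.1 hp.2).congr
        fun p hp => hF'1 p hp.1 hp.2
    · exact (hG.comp (hΨ.comp continuous_swap).continuousOn
        fun p hp => hΨK p.swap (hswap p hp.1) hp.2).congr fun p hp => hF'2 p hp.1 hp.2
    · exact (hF.mono Set.subset_union_right).congr hF's
  · rintro p (hp | hp)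
    · rcases le_total (p.1 kk) (p.2 kk) with hle | hle
      · rw [hF'1 p hp hle, hF'2 _ (hswap p hp) hle, Prod.swap_swap]
      · rw [hF'2 p hp hle, hF'1 _ (hswap p hp) hle]
    · rw [hF's p hp, hF's _ (hswap' p hp), hFs p (Or.inr hp)]
  · rw [hF's p hp]
    exact hFb p hp

/-- If the homotopy groups of `Y` vanish above degree `n`, the Whitehead square of `b` extends over
`I^n × I^n` to a map invariant under exchange of the two factors. -/
lemma exists_symmetric (hn : 2 ≤ n) (hY : ∀ m, n < m → ∀ y : Y, Subsingleton (π_ m Y y))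
    (b : (Fin n → I) → Y) (hb : Continuous b) (y : Y)
    (hby : ∀ z ∈ Cube.boundary (Fin n), b z = y) :
    ∃ F : (Fin n → I) × (Fin n → I) → Y, Continuous F ∧ (∀ x z, F (x, z) = F (z, x)) ∧
      ∀ x, ∀ z ∈ Cube.boundary (Fin n), F (x, z) = b x := by
  let π : (Fin n → ℝ) → Fin n → I := fun x i => Set.projIcc 0 1 zero_le_one (x i)
  let ι : (Fin n → I) → Fin n → ℝ := fun x i => x i
  have hπι : ∀ x, π (ι x) = x := fun x => funext fun i => Set.projIcc_val _ _
  have hι : Continuous ι := by fun_prop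
  have hπ : Continuous π := continuous_pi fun i => continuous_projIcc.comp (continuous_apply i)
  have hbase := symmExt_base (n := n) ⟨n - 1, by omega⟩ (by simp; omega) (b ∘ π) (hb.comp hπ) y
    (by
      rintro x ⟨i, hi⟩
      refine hby _ ⟨i, ?_⟩
      rcases hi with hi | hi
      · left; simp [π, hi]
      · right; simp [π, hi])
  have hall : ∀ j, j ≤ n - 1 → SymmExt n (n - 1 - j) (b ∘ π) := by
    intro j
    induction j with
    | zero => intro _; exact hbase
    | succ j ih =>
      intro hj
      refine symmExt_step (by omega) hY _ ?_
      have := ih (by omega)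
      rwa [show n - 1 - j = n - 1 - (j + 1) + 1 by omega] at this
  obtain ⟨F, hF, hFs, hFb⟩ := hall (n - 1) le_rfl
  rw [Nat.sub_self] at hF hFs
  have hC : ∀ x : Fin n → I, ι x ∈ Set.Icc 0 1 := fun x => ⟨fun i => (x i).2.1, fun i => (x i).2.2⟩
  have hD : ∀ x z : Fin n → I, (ι x, ι z) ∈ diag n 0 ∪ sides n := fun x z =>
    Or.inl ⟨hC x, hC z, fun i hi => absurd hi (Nat.not_lt_zero _)⟩
  refine ⟨fun p => F (ι p.1, ι p.2), hF.comp_continuous (by fun_prop) fun p => hD _ _,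
    fun x z => (hFs _ (hD x z)).symm, fun x z hz => ?_⟩
  have hz' : OnFace (ι z) := by
    obtain ⟨i, hi⟩ := hz
    exact ⟨i, hi.imp (fun h => by simp [ι, h]) (fun h => by simp [ι, h])⟩
  have := (hFb (ι x, ι z) ⟨hC x, hC z, Or.inr hz'⟩).1 hz'
  simpa [hπι] using this

end SymmetricExtension

/-! ### Products of Eilenberg-Mac Lane spaces -/

/-- If `π_n` of all factors but the `n`-th vanishes, a map of the `n`-cube to the product, constant on the
boundary, is homotopic relative to the boundary to one that moves only in the `n`-th factor. -/
lemma exists_concentrated {n : ℕ} {Y : ℕ → Type} [∀ k, TopologicalSpace (Y k)] (x : ∀ k, Y k)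
    (hY : ∀ k, k ≠ n → Subsingleton (π_ n (Y k) (x k))) (f : (Fin n → I) → ∀ k, Y k)
    (hf : Continuous f) (hfx : ∀ z ∈ Cube.boundary (Fin n), f z = x) :
    ∃ h : C(I × (Fin n → I), ∀ k, Y k), (∀ z, h (1, z) = f z) ∧
      (∀ z, h (0, z) = Function.update x n (f z n)) ∧
      ∀ t, ∀ z ∈ Cube.boundary (Fin n), h (t, z) = x := by
  have : ∀ k, ∃ h : C(I × (Fin n → I), Y k), (∀ z, h (1, z) = f z k) ∧
      (∀ z, h (0, z) = Function.update x n (f z n) k) ∧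
      ∀ t, ∀ z ∈ Cube.boundary (Fin n), h (t, z) = x k := by
    intro k
    by_cases hk : k = n
    · subst hk
      refine ⟨⟨fun p => f p.2 k, by fun_prop⟩, fun z => rfl, fun z => ?_, fun t z hz => ?_⟩
      · simp
      · exact congrFun (hfx z hz) k
    · obtain ⟨h, h0, h1, hb⟩ := exists_nullhomotopy (hY k hk) (fun z => f z k) (by fun_prop)
        (fun z hz => congrFun (hfx z hz) k)
      refine ⟨⟨fun p => h (unitInterval.symm p.1, p.2), by fun_prop⟩, fun z => ?_, fun z => ?_,
        fun t z hz => hb _ z hz⟩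
      · simp [h0]
      · simp [h1, Function.update_of_ne hk]
  choose h h1 h0 hb using this
  exact ⟨⟨fun p k => h k p, by fun_prop⟩, fun z => funext fun k => h1 k z,
    fun z => funext fun k => h0 k z, fun t z hz => funext fun k => hb k t z hz⟩

/-- Under an equivalence, the class of the collapse map moves into the factor `Y n`, where its Whitehead
square extends symmetrically; carried back to the sphere this contradicts `no_symmetric`. -/
theorem no_equiv {n : ℕ} (hn : 2 ≤ n) (Y : ℕ → Type) [∀ k, TopologicalSpace (Y k)]
    (hY : ∀ (k i : ℕ), i ≠ k → ∀ y : Y k, Subsingleton (π_ i (Y k) y))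
    (E : ContinuousMap.HomotopyEquiv (Tn n) (∀ k, Y k)) : False := by
  let φ : C(Tn n, ∀ k, Y k) := E.toFun
  let ψ : C(∀ k, Y k, Tn n) := E.invFun
  obtain ⟨J⟩ : (ψ.comp φ).Homotopic (ContinuousMap.id _) := E.left_inv
  let κ : C(Fin n → I, Tn n) := ⟨collapse, continuous_collapse⟩
  have hκ : ∀ z ∈ Cube.boundary (Fin n), κ z = OnePoint.infty := by
    rintro z ⟨i, hi⟩
    exact collapse_bdry z i hi
  let x := φ OnePoint.infty
  obtain ⟨h, h1, h0, hb⟩ := exists_concentrated x (fun k hk => hY k n hk.symm _)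
    (fun z => φ (κ z)) (by fun_prop) (fun z hz => by rw [hκ z hz])
  obtain ⟨F, hF, hFs, hFb⟩ := exists_symmetric hn (fun m hm y => hY n m hm.ne' y)
    (fun z => φ (κ z) n) (by fun_prop) (x n) (fun z hz => by rw [hκ z hz])
  let β : C(Fin n → I, Tn n) := ⟨fun z => ψ (h (0, z)), by fun_prop⟩
  let A : β.Homotopy (ψ.comp (φ.comp κ)) :=
    { toFun := fun p => ψ (h p)
      continuous_toFun := by fun_prop
      map_zero_left := fun z => rfl
      map_one_left := fun z => by simp [h1] }
  let B : (ψ.comp (φ.comp κ)).Homotopy κ :=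
    { toFun := fun p => J (p.1, κ p.2)
      continuous_toFun := by fun_prop
      map_zero_left := fun z => by simp
      map_one_left := fun z => by simp }
  let H := A.trans B
  have hA : ∀ t, ∀ z ∈ Cube.boundary (Fin n), A (t, z) = ψ x := fun t z hz =>
    congrArg ψ (hb t z hz)
  have hB : ∀ t, ∀ z ∈ Cube.boundary (Fin n), B (t, z) = J (t, OnePoint.infty) := fun t z hz =>
    congrArg (fun c => J (t, c)) (hκ z hz)
  have hz0 : (fun _ => 0 : Fin n → I) ∈ Cube.boundary (Fin n) := ⟨⟨0, by omega⟩, Or.inl rfl⟩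
  refine no_symmetric hn (fun p => ψ (Function.update x n (F p)))
    (ψ.continuous.comp (continuous_const.update n hF)) (fun a c => by rw [hFs]) β
    (fun a c i hc => ?_) H H.continuous (fun z => H.apply_zero z) (fun z => H.apply_one z)
    (fun t => H (t, fun _ => 0)) (fun t z i hz => ?_)
  · change _ = ψ (h (0, a))
    rw [h0, hFb a c ⟨i, hc⟩]
  · simp only [H, ContinuousMap.Homotopy.trans_apply]
    split_ifs
    · rw [hA _ z ⟨i, hz⟩, hA _ _ hz0]
    · rw [hB _ z ⟨i, hz⟩, hB _ _ hz0]

end SphereEM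

/-- For `n ≥ 2`, the `n`-sphere is not homotopy equivalent to a product of
Eilenberg-Mac Lane spaces. -/
theorem sphere_not_homotopyEquiv_pi_eilenbergMacLane
    (n : ℕ) (hn : 2 ≤ n)
    (Y : ℕ → Type) [∀ k, TopologicalSpace (Y k)] [∀ k, PathConnectedSpace (Y k)]
    (y₀ : ∀ k, Y k)
    (hY : ∀ (k i : ℕ), i ≠ k → ∀ y : Y k, Subsingleton (π_ i (Y k) y)) :
    IsEmpty (ContinuousMap.HomotopyEquiv
      (Metric.sphere (0 : EuclideanSpace ℝ (Fin (n + 1))) 1) (∀ k, Y k)) := by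
  exact ⟨fun E => SphereEM.no_equiv hn Y hY
    ((SphereEM.sphereHomeo n).toHomotopyEquiv.trans E)⟩
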